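/- arXiv:0904.2847 — 2 statements merged into one kernel-verified Lean document; each statement's English description precedes it below -/
import Mathlib

section
/- Let B be a regular local ring, let x₁, …, x_c be a B-regular sequence contained in the maximal ideal of B, and set A = B/(x₁, …, x_c) (so A is a local complete intersection). Then every totally acyclic minimal complex C of finitely generated free A-modules has symmetric growth, i.e. cx⁺(C) = cx⁻(C). -/
/-!
STATEMENT 7: Let B be a regular local ring, x₁, …, x_c a B-regular sequence contained
in the maximal ideal of B, and A = B/(x₁, …, x_c) (so A is a local complete
intersection).  Then every totally acyclic minimal complex C of finitely generated
free A-modules has symmetric growth, i.e. cx⁺(C) = cx⁻(C).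

We present A as a local ring together with a surjective ring homomorphism π : B → A
whose kernel is the ideal (x₁, …, x_c).  A regular local ring is a commutative
Noetherian local ring whose maximal ideal can be generated by (Krull dimension of B)
many elements.
-/

universe u

open IsLocalRing Filter

/-- A commutative Noetherian local ring is regular if its maximal ideal can be
generated by `dim B` elements. -/
def IsRegularLocal (B : Type u) [CommRing B] [IsLocalRing B] : Prop :=
  IsNoetherianRing B ∧ ∃ s : Finset B, Ideal.span (s : Set B) = maximalIdeal B ∧
    (s.card : WithBot (WithTop ℕ)) = ringKrullDim B

/-- A totally acyclic complex of finitely generated free `A`-modules. -/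
structure TotallyAcyclicComplex (A : Type u) [CommRing A] : Type (u + 1) where
  C : ℤ → Type u
  [acg : ∀ n, AddCommGroup (C n)]
  [mod : ∀ n, Module A (C n)]
  free : ∀ n, Module.Free A (C n)
  fin : ∀ n, Module.Finite A (C n)
  d : ∀ n : ℤ, C (n + 1) →ₗ[A] C n
  exact : ∀ n : ℤ, LinearMap.range (d (n + 1)) = LinearMap.ker (d n)
  dualExact : ∀ n : ℤ,
    LinearMap.range ((d n).dualMap) = LinearMap.ker ((d (n + 1)).dualMap)

attribute [instance] TotallyAcyclicComplex.acg TotallyAcyclicComplex.mod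

/-- The polynomial rate of growth of a sequence of Betti numbers `β` in the positive
direction: the infimum (in `ℕ∞`, so `⊤` if no such `t` exists) of all `t ∈ ℕ` such
that `β n ≤ a · n^(t−1)` for some real `a` and all sufficiently large `n`. -/
noncomputable def complexityPlus (β : ℤ → ℕ) : ℕ∞ :=
  sInf {t : ℕ∞ | ∃ s : ℕ, t = (s : ℕ∞) ∧ ∃ a : ℝ,
    ∀ᶠ n : ℕ in atTop, (β (n : ℤ) : ℝ) ≤ a * (n : ℝ) ^ ((s : ℤ) - 1)}

/-- The polynomial rate of growth of `β` in the negative direction. -/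
noncomputable def complexityMinus (β : ℤ → ℕ) : ℕ∞ :=
  complexityPlus fun n => β (-n)

universe v

namespace SymGrowth

inductive RegIdeal {B : Type u} [CommRing B] : Ideal B → Prop
  | bot : RegIdeal ⊥
  | step (I : Ideal B) (y : B) : RegIdeal I → (∀ b, y * b ∈ I → b ∈ I) →
      RegIdeal (I ⊔ Ideal.span {y})

theorem RegIdeal.comap {B : Type u} [CommRing B] (y : B) (hy : ∀ b, y * b = 0 → b = 0)
    {I : Ideal (B ⧸ Ideal.span {y})} (h : RegIdeal I) :
    RegIdeal (I.comap (Ideal.Quotient.mk (Ideal.span {y}))) := by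
  induction h with
  | bot =>
    have := RegIdeal.step (⊥ : Ideal B) y .bot (by simpa using hy)
    rw [bot_sup_eq] at this
    rwa [← RingHom.ker_eq_comap_bot, Ideal.mk_ker]
  | step I z _ hz ih =>
    obtain ⟨w, rfl⟩ := Ideal.Quotient.mk_surjective z
    have := RegIdeal.step _ w ih (by
      intro b hb
      rw [Ideal.mem_comap, map_mul] at hb
      exact hz _ hb)
    convert this using 1
    apply le_antisymm
    · intro v hv
      rw [Ideal.mem_comap, Submodule.mem_sup] at hv
      obtain ⟨a, ha, c, hc, hac⟩ := hv
      obtain ⟨t, rfl⟩ := Ideal.mem_span_singleton'.1 hc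
      obtain ⟨t, rfl⟩ := Ideal.Quotient.mk_surjective t
      have : v = (v - t * w) + t * w := by ring
      rw [this]
      refine Ideal.add_mem _ (Ideal.mem_sup_left ?_)
        (Ideal.mem_sup_right (Ideal.mem_span_singleton'.2 ⟨t, rfl⟩))
      rw [Ideal.mem_comap, map_sub, map_mul, ← hac]
      simpa using ha
    · rw [sup_le_iff]
      refine ⟨Ideal.comap_mono le_sup_left, ?_⟩
      rw [Ideal.span_le]
      rintro _ rfl
      exact Ideal.mem_sup_right (Ideal.subset_span rfl)

theorem regIdeal_max (d : ℕ) : ∀ (B : Type u) [CommRing B] [IsLocalRing B] [IsNoetherianRing B]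
    (s : Finset B), s.card ≤ d → Ideal.span (s : Set B) = maximalIdeal B →
    (d : WithBot ℕ∞) ≤ ringKrullDim B → IsDomain B ∧ RegIdeal (maximalIdeal B) := by
  classical
  induction d with
  | zero =>
    intro B _ _ _ s hs hm _
    rw [Nat.le_zero, Finset.card_eq_zero] at hs
    subst hs
    have hm' : maximalIdeal B = ⊥ := by rw [← hm]; simp
    rw [hm']
    exact ⟨(isField_iff_maximalIdeal_eq.2 hm').isDomain, .bot⟩
  | succ d ih =>
    intro B _ _ _ s hs hm hdim
    obtain ⟨y, hym, hy2, hyP⟩ : ∃ y ∈ maximalIdeal B, y ∉ (maximalIdeal B) ^ 2 ∧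
        ∀ P ∈ minimalPrimes B, y ∉ P := by
      by_contra! hcon
      have key : ∃ i ∈ insert ((maximalIdeal B) ^ 2) (minimalPrimes B), maximalIdeal B ≤ i := by
        refine (Ideal.subset_union_prime_finite (f := fun i : Ideal B => i)
          ((minimalPrimes.finite_of_isNoetherianRing B).insert _)
          ((maximalIdeal B) ^ 2) ((maximalIdeal B) ^ 2) ?_).1 ?_
        rotate_left
        · intro y hy
          by_cases h2 : y ∈ (maximalIdeal B) ^ 2
          · simp only [Set.mem_iUnion]
            exact ⟨_, Set.mem_insert _ _, h2⟩
          · obtain ⟨P, hP, hyP⟩ := hcon y hy h2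
            simp only [Set.mem_iUnion]
            exact ⟨P, Set.mem_insert_of_mem _ hP, hyP⟩
        · intro i hi h1 _
          rcases hi with rfl | hi
          · exact absurd rfl h1
          · exact hi.1.1
      have key2 : ∃ P ∈ minimalPrimes B, maximalIdeal B ≤ P := by
        obtain ⟨i, rfl | hi, hle⟩ := key
        · have : maximalIdeal B = ⊥ := by
            apply Submodule.eq_bot_of_le_smul_of_le_jacobson_bot (maximalIdeal B) _
              (IsNoetherian.noetherian _)
            · rwa [smul_eq_mul, ← sq]
            · exact (jacobson_eq_maximalIdeal ⊥ bot_ne_top).ge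
          obtain ⟨P, hP, _⟩ := Ideal.exists_minimalPrimes_le (I := (⊥ : Ideal B))
            (J := maximalIdeal B) bot_le
          exact ⟨P, hP, this ▸ bot_le⟩
        · exact ⟨i, hi, hle⟩
      obtain ⟨P, hP, hle⟩ := key2
      have hPm : P = maximalIdeal B :=
        le_antisymm (le_maximalIdeal hP.1.1.ne_top) hle
      subst hPm
      have h0 : (maximalIdeal B).height = 0 := by
        exact Ideal.height_eq_zero_iff.2 hP
      rw [← maximalIdeal_height_eq_ringKrullDim, h0] at hdim
      have : ((d + 1 : ℕ) : ℕ∞) ≤ 0 := by exact_mod_cast hdim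
      simp at this
    have hmy : Ideal.span {y} ≤ maximalIdeal B := by
      rw [Ideal.span_le]; rintro _ rfl; exact hym
    -- exchange
    obtain ⟨z, hz, hspan⟩ : ∃ z ∈ s, maximalIdeal B =
        Ideal.span {y} ⊔ Ideal.span ((s.erase z : Finset B) : Set B) := by
      have hy' := hym
      rw [← hm] at hy'
      obtain ⟨a, ha⟩ := Submodule.mem_span_finset'.1 hy'
      obtain ⟨z, hzu⟩ : ∃ z, IsUnit (a z) := by
        by_contra! hcon
        apply hy2
        rw [← ha, sq]
        refine Ideal.sum_mem _ fun z _ => Ideal.mul_mem_mul ?_ ?_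
        · exact (mem_maximalIdeal _).2 (hcon z)
        · rw [← hm]; exact Ideal.subset_span z.2
      refine ⟨z, z.2, le_antisymm ?_ ?_⟩
      · rw [← hm, Ideal.span_le]
        intro w hw
        by_cases hwz : w = z
        · subst hwz
          rw [Finset.sum_eq_add_sum_sdiff_singleton_of_mem (Finset.mem_univ z)] at ha
          have hz1 : a z * (z : B) ∈
              Ideal.span {y} ⊔ Ideal.span ((s.erase (z : B) : Finset B) : Set B) := by
            rw [← smul_eq_mul, eq_sub_of_add_eq ha]
            refine Ideal.sub_mem _ (Ideal.mem_sup_left (Ideal.subset_span rfl))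
              (Ideal.sum_mem _ fun w hw => Ideal.mul_mem_left _ _
                (Ideal.mem_sup_right (Ideal.subset_span ?_)))
            simp only [Finset.coe_erase, Set.mem_sdiff, Finset.mem_coe, Finset.coe_mem,
              Set.mem_singleton_iff, true_and]
            intro h
            simp at hw
            exact hw (Subtype.ext h)
          exact (Ideal.unit_mul_mem_iff_mem _ hzu).1 hz1
        · exact Ideal.mem_sup_right (Ideal.subset_span (by simp [hwz]; exact hw))
      · rw [sup_le_iff]
        refine ⟨hmy, ?_⟩
        rw [← hm]
        exact Ideal.span_mono (by simp)
    have hnt : Nontrivial (B ⧸ Ideal.span {y}) :=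
      Ideal.Quotient.nontrivial_iff.2 (ne_top_of_le_ne_top Ideal.IsPrime.ne_top' hmy)
    have hloc : IsLocalRing (B ⧸ Ideal.span {y}) :=
      IsLocalRing.of_surjective' (Ideal.Quotient.mk (Ideal.span {y})) Ideal.Quotient.mk_surjective
    have hcom : (maximalIdeal (B ⧸ Ideal.span {y})).comap (Ideal.Quotient.mk (Ideal.span {y}))
        = maximalIdeal B := by
      have : IsLocalHom (Ideal.Quotient.mk (Ideal.span {y})) :=
        IsLocalHom.of_surjective _ Ideal.Quotient.mk_surjective
      exact (local_hom_TFAE (Ideal.Quotient.mk (Ideal.span {y}))).out 0 4 |>.1 this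
    have hmap : maximalIdeal (B ⧸ Ideal.span {y}) =
        (maximalIdeal B).map (Ideal.Quotient.mk (Ideal.span {y})) := by
      rw [← hcom, Ideal.map_comap_of_surjective _ Ideal.Quotient.mk_surjective]
    have hgen : Ideal.span (((s.erase z).image (Ideal.Quotient.mk (Ideal.span {y})) :
        Finset (B ⧸ Ideal.span {y})) : Set (B ⧸ Ideal.span {y})) =
        maximalIdeal (B ⧸ Ideal.span {y}) := by
      rw [hmap, hspan, Ideal.map_sup, Ideal.map_quotient_self, bot_sup_eq, Ideal.map_span,
        Finset.coe_image]
    have hcard : (s.erase z).card ≤ d := by rw [Finset.card_erase_of_mem hz]; omega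
    have hd1 : ringKrullDim B ≤ ringKrullDim (B ⧸ Ideal.span {y}) + 1 := by
      have := ringKrullDim_le_ringKrullDim_quotient_add_card ({y} : Finset B) (by
        simp only [Finset.coe_singleton, Set.singleton_subset_iff]
        rw [IsLocalRing.ringJacobson_eq_maximalIdeal]; exact hym)
      rw [Finset.coe_singleton] at this
      simpa using this
    have hdq : (d : WithBot ℕ∞) ≤ ringKrullDim (B ⧸ Ideal.span {y}) := by
      have h := hdim.trans hd1
      push_cast at h
      generalize ringKrullDim (B ⧸ Ideal.span {y}) = q at h
      induction q with
      | bot => simp at h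
      | coe q =>
        have h' : ((d : ℕ∞) + 1) ≤ q + 1 := by exact_mod_cast h
        have h'' : (d : ℕ∞) ≤ q := (ENat.add_le_add_iff_right ENat.one_ne_top).1 h'
        exact_mod_cast h''
    have hcardeq : ((s.erase z).image (Ideal.Quotient.mk (Ideal.span {y}))).card ≤ d :=
      Finset.card_image_le.trans hcard
    obtain ⟨hdom, hreg⟩ := ih (B ⧸ Ideal.span {y}) _ hcardeq hgen hdq
    have hprime : (Ideal.span {y}).IsPrime := (Ideal.Quotient.isDomain_iff_prime _).1 hdom
    obtain ⟨P, hP, hPy⟩ := Ideal.exists_minimalPrimes_le (I := (⊥ : Ideal B))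
            (J := Ideal.span {y}) bot_le
    have hPprime : P.IsPrime := hP.1.1
    have hP0 : P = ⊥ := by
      apply Submodule.eq_bot_of_le_smul_of_le_jacobson_bot (maximalIdeal B) _
              (IsNoetherian.noetherian _)
      · intro p hp
        obtain ⟨a, rfl⟩ := Ideal.mem_span_singleton'.1 (hPy hp)
        have ha : a ∈ P := (hPprime.mem_or_mem hp).resolve_right (hyP P hP)
        rw [mul_comm]
        exact Ideal.mul_mem_mul hym ha
      · exact (jacobson_eq_maximalIdeal ⊥ bot_ne_top).ge
    have hdomB : IsDomain B := by
      rw [hP0] at hPprime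
      exact IsDomain.of_bot_isPrime B
    refine ⟨hdomB, ?_⟩
    have hy0 : y ≠ 0 := by rintro rfl; exact hy2 (Ideal.zero_mem _)
    rw [← hcom]
    exact hreg.comap y (fun b hb => (mul_eq_zero.1 hb).resolve_left hy0)

end SymGrowth

namespace SymGrowth

section Avoid
open MvPolynomial
attribute [local instance] MvPolynomial.gradedAlgebra
variable {σ k : Type*} [Field k] [Finite σ]

lemma exists_homog_not_mem (Q Q' : Ideal (MvPolynomial σ k))
    (hQ : Q.IsHomogeneous (homogeneousSubmodule σ k)) (h : ¬ Q ≤ Q') :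
    ∃ (e : ℕ) (p : MvPolynomial σ k), p.IsHomogeneous e ∧ p ∈ Q ∧ p ∉ Q' := by
  classical
  by_contra! hcon
  apply h
  intro r hr
  rw [← DirectSum.sum_support_decompose (homogeneousSubmodule σ k) r]
  refine Ideal.sum_mem _ fun i _ => hcon i _ ?_ (hQ i hr)
  exact (mem_homogeneousSubmodule _ _).1 (SetLike.coe_mem _)

lemma homog_avoid (n : ℕ) : ∀ (S : Finset (Ideal (MvPolynomial σ k))), S.card ≤ n →
    (∀ Q ∈ S, Q.IsPrime ∧ Q.IsHomogeneous (homogeneousSubmodule σ k) ∧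
      ¬ Ideal.span (Set.range X) ≤ Q) →
    ∃ (e : ℕ) (p : MvPolynomial σ k), 0 < e ∧ p.IsHomogeneous e ∧ ∀ Q ∈ S, p ∉ Q := by
  classical
  induction n with
  | zero =>
    intro S hS _
    rw [Nat.le_zero, Finset.card_eq_zero] at hS
    subst hS
    exact ⟨1, 0, one_pos, isHomogeneous_zero _ _ _, by simp⟩
  | succ n ih =>
    intro S hS hprop
    by_cases hcase : ∃ Q ∈ S, ∃ Q' ∈ S, Q ≠ Q' ∧ Q ≤ Q'
    · obtain ⟨Q, hQ, Q', hQ', hne, hle⟩ := hcase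
      obtain ⟨e, p, he, hp, hpS⟩ := ih (S.erase Q)
        (by rw [Finset.card_erase_of_mem hQ]; omega)
        (fun R hR => hprop R (Finset.mem_of_mem_erase hR))
      refine ⟨e, p, he, hp, fun R hR => ?_⟩
      by_cases hRQ : R = Q
      · subst hRQ
        exact fun h => hpS Q' (Finset.mem_erase.2 ⟨hne.symm, hQ'⟩) (hle h)
      · exact hpS R (Finset.mem_erase.2 ⟨hRQ, hR⟩)
    · push Not at hcase
      rcases S.eq_empty_or_nonempty with rfl | ⟨Q, hQ⟩
      · exact ⟨1, 0, one_pos, isHomogeneous_zero _ _ _, by simp⟩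
      obtain ⟨e, p, he, hp, hpS⟩ := ih (S.erase Q)
        (by rw [Finset.card_erase_of_mem hQ]; omega)
        (fun R hR => hprop R (Finset.mem_of_mem_erase hR))
      by_cases hpQ : p ∈ Q
      swap
      · refine ⟨e, p, he, hp, fun R hR => ?_⟩
        by_cases hRQ : R = Q
        · subst hRQ; exact hpQ
        · exact hpS R (Finset.mem_erase.2 ⟨hRQ, hR⟩)
      obtain ⟨hQp, hQh, hQX⟩ := hprop Q hQ
      obtain ⟨i, hi⟩ : ∃ i : σ, (X i : MvPolynomial σ k) ∉ Q := by
        by_contra! hcon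
        apply hQX
        rw [Ideal.span_le]
        rintro _ ⟨i, rfl⟩
        exact hcon i
      have hchoose : ∀ R : Ideal (MvPolynomial σ k), ∃ (e : ℕ) (p : MvPolynomial σ k),
          R ∈ S.erase Q → p.IsHomogeneous e ∧ p ∈ R ∧ p ∉ Q := by
        intro R
        by_cases hR : R ∈ S.erase Q
        · obtain ⟨hne, hRS⟩ := Finset.mem_erase.1 hR
          obtain ⟨e, p, h⟩ := exists_homog_not_mem R Q (hprop R hRS).2.1
            (hcase R hRS Q hQ hne)
          exact ⟨e, p, fun _ => h⟩
        · exact ⟨0, 0, fun h => absurd h hR⟩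
      choose ee q hq using hchoose
      set g : MvPolynomial σ k := X i * ∏ R ∈ S.erase Q, q R with hg
      have hgh : g.IsHomogeneous (1 + ∑ R ∈ S.erase Q, ee R) :=
        (isHomogeneous_X _ _).mul (IsHomogeneous.prod _ _ _ fun R hR => (hq R hR).1)
      have hgQ : g ∉ Q := by
        intro h
        rcases hQp.mem_or_mem h with h | h
        · exact hi h
        · obtain ⟨R, hR, hqR⟩ := (Ideal.IsPrime.prod_mem_iff).1 h
          exact (hq R hR).2.2 hqR
      have hgR : ∀ R ∈ S.erase Q, g ∈ R := by
        intro R hR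
        refine Ideal.mul_mem_left _ _ (Ideal.mem_of_dvd _ (Finset.dvd_prod_of_mem q hR) (hq R hR).2.1)
      set m := 1 + ∑ R ∈ S.erase Q, ee R with hm
      have hm0 : 0 < m := by omega
      refine ⟨e * m, p ^ m + g ^ e, Nat.mul_pos he hm0, ?_, ?_⟩
      · refine IsHomogeneous.add (hp.pow m) ?_
        rw [mul_comm]; exact hgh.pow e
      · intro R hR hmem
        by_cases hRQ : R = Q
        · subst hRQ
          have : g ^ e ∈ R := (Ideal.add_mem_iff_right _ (Ideal.pow_mem_of_mem _ hpQ _ hm0)).1 hmem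
          exact hgQ (hQp.mem_of_pow_mem _ this)
        · have hR' := Finset.mem_erase.2 ⟨hRQ, hR⟩
          have : p ^ m ∈ R :=
            (Ideal.add_mem_iff_left _ (Ideal.pow_mem_of_mem _ (hgR R hR') _ he)).1 hmem
          exact hpS R hR' ((hprop R hR).1.mem_of_pow_mem _ this)

/-- For every finitely generated module there is a homogeneous polynomial of positive degree
whose kernel is annihilated by a power of the irrelevant ideal. -/
lemma exists_filter_regular (M : Type*) [AddCommGroup M] [Module (MvPolynomial σ k) M]
    [Module.Finite (MvPolynomial σ k) M] :
    ∃ (e : ℕ) (p : MvPolynomial σ k), 0 < e ∧ p.IsHomogeneous e ∧ ∃ r : ℕ, ∀ m : M, p • m = 0 →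
      ∀ q ∈ (Ideal.span (Set.range (X : σ → MvPolynomial σ k))) ^ r, q • m = 0 := by
  classical
  have key : ∃ S : Finset (Ideal (MvPolynomial σ k)), (∀ Q ∈ S, Q.IsPrime ∧
      ¬ Ideal.span (Set.range X) ≤ Q) ∧ ∀ p : MvPolynomial σ k, (∀ Q ∈ S, p ∉ Q) →
      ∃ r : ℕ, ∀ m : M, p • m = 0 →
      ∀ q ∈ (Ideal.span (Set.range (X : σ → MvPolynomial σ k))) ^ r, q • m = 0 := by
    induction ‹Module.Finite (MvPolynomial σ k) M› using
      IsNoetherianRing.induction_on_isQuotientEquivQuotientPrime (MvPolynomial σ k) with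
    | subsingleton N =>
      exact ⟨∅, by simp, fun p _ => ⟨0, fun m _ q _ => Subsingleton.elim _ _⟩⟩
    | quotient N Q f =>
      by_cases hQ : Ideal.span (Set.range X) ≤ Q.1
      · refine ⟨∅, by simp, fun p _ => ⟨1, fun m _ q hq => ?_⟩⟩
        rw [pow_one] at hq
        apply f.injective
        rw [map_smul, map_zero]
        obtain ⟨w, hw⟩ := Submodule.Quotient.mk_surjective _ (f m)
        rw [← hw, ← Submodule.Quotient.mk_smul,
          Submodule.Quotient.mk_eq_zero]
        exact Ideal.mul_mem_right _ _ (hQ hq)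
      · refine ⟨{Q.1}, by simpa using ⟨Q.2, hQ⟩, fun p hp => ⟨0, fun m hm q _ => ?_⟩⟩
        have hp' : p ∉ Q.1 := hp _ (by simp)
        suffices m = 0 by rw [this, smul_zero]
        apply f.injective
        rw [map_zero]
        have h1 : p • f m = 0 := by rw [← map_smul, hm, map_zero]
        obtain ⟨w, hw⟩ := Submodule.Quotient.mk_surjective _ (f m)
        rw [← hw, ← Submodule.Quotient.mk_smul,
          Submodule.Quotient.mk_eq_zero] at h1
        rw [← hw, Submodule.Quotient.mk_eq_zero]
        exact (Q.2.mem_or_mem h1).resolve_left hp'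
    | exact N₁ N₂ N₃ f g hf hg hfg h1 h3 =>
      obtain ⟨S1, hS1, h1⟩ := h1
      obtain ⟨S3, hS3, h3⟩ := h3
      refine ⟨S1 ∪ S3, ?_, ?_⟩
      · intro Q hQ
        rcases Finset.mem_union.1 hQ with h | h
        · exact hS1 Q h
        · exact hS3 Q h
      · intro p hp
        obtain ⟨r1, h1⟩ := h1 p fun Q hQ => hp Q (Finset.mem_union_left _ hQ)
        obtain ⟨r3, h3⟩ := h3 p fun Q hQ => hp Q (Finset.mem_union_right _ hQ)
        refine ⟨r1 + r3, fun m hm q hq => ?_⟩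
        rw [pow_add] at hq
        refine Submodule.mul_induction_on hq ?_ ?_
        · intro a ha b hb
          have hb0 : g (b • m) = 0 := by
            rw [map_smul]
            exact h3 (g m) (by rw [← map_smul, hm, map_zero]) b hb
          obtain ⟨n, hn⟩ := (hfg _).1 hb0
          have hn0 : p • n = 0 := by
            apply hf
            rw [map_smul, hn, smul_comm, hm, smul_zero, map_zero]
          rw [mul_smul, ← hn, ← map_smul, h1 n hn0 a ha, map_zero]
        · intro a b ha hb
          rw [add_smul, ha, hb, add_zero]
  obtain ⟨S, hS, key⟩ := key
  obtain ⟨e, p, he, hp, hpS⟩ := homog_avoid S.card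
    (S.image fun Q => (Q.homogeneousCore (homogeneousSubmodule σ k)).toIdeal)
    Finset.card_image_le (by
      intro Q hQ
      obtain ⟨R, hR, rfl⟩ := Finset.mem_image.1 hQ
      obtain ⟨hRp, hRX⟩ := hS R hR
      refine ⟨?_, HomogeneousIdeal.isHomogeneous _, ?_⟩
      · exact hRp.homogeneousCore (𝒜 := homogeneousSubmodule σ k)
      · intro h
        exact hRX (h.trans (Ideal.toIdeal_homogeneousCore_le _ R)))
  refine ⟨e, p, he, hp, key p fun Q hQ hpQ => ?_⟩
  refine hpS _ (Finset.mem_image_of_mem _ hQ) ?_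
  exact Ideal.mem_homogeneousCore_of_homogeneous_of_mem
    (𝒜 := homogeneousSubmodule σ k) ⟨e, (mem_homogeneousSubmodule _ _).2 hp⟩ hpQ

end Avoid
end SymGrowth

namespace SymGrowth

section Graded
open MvPolynomial
variable {σ k H : Type*} [Field k] [Fintype σ] [AddCommGroup H] [Module k H]
  [Module (MvPolynomial σ k) H] [IsScalarTower k (MvPolynomial σ k) H]

lemma smul_mem_of_X_stable (L : Submodule k H)
    (hL : ∀ i, ∀ x ∈ L, (X i : MvPolynomial σ k) • x ∈ L) (p : MvPolynomial σ k) :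
    ∀ x ∈ L, p • x ∈ L := by
  induction p using MvPolynomial.induction_on with
  | C a =>
    intro x hx
    have : (C a : MvPolynomial σ k) • x = a • x := by
      rw [← algebraMap_eq, algebraMap_smul]
    rw [this]; exact L.smul_mem a hx
  | add p q hp hq =>
    intro x hx
    rw [add_smul]; exact L.add_mem (hp x hx) (hq x hx)
  | mul_X p i hp =>
    intro x hx
    rw [mul_smul]; exact hp _ (hL i x hx)

/-- Data of a graded module over a polynomial ring, variables acting with degree two, which is
generated in degrees at most `N + 1` when restricted to degrees at least `N`. -/
structure GrData (Hn : ℤ → Submodule k H) (N : ℤ) : Prop where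
  fin : ∀ n, (Hn n).FG
  proj : ∀ n, ∃ π : H →ₗ[k] H, (∀ x ∈ Hn n, π x = x) ∧ ∀ m, m ≠ n → ∀ x ∈ Hn m, π x = 0
  hX : ∀ (i : σ) n, ∀ x ∈ Hn n, (X i : MvPolynomial σ k) • x ∈ Hn (n + 2)
  gen : ∀ n ≥ N, ∀ x ∈ Hn (n + 2), ∃ y : σ → H, (∀ i, y i ∈ Hn n) ∧
    x = ∑ i, (X i : MvPolynomial σ k) • y i

lemma GrData.exists_fg {Hn : ℤ → Submodule k H} {N : ℤ} (h : GrData (σ := σ) Hn N) :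
    ∃ W : Submodule (MvPolynomial σ k) H, W.FG ∧ ∀ n ≥ N, ∀ x ∈ Hn n, x ∈ W := by
  classical
  obtain ⟨s0, hs0⟩ := h.fin N
  obtain ⟨s1, hs1⟩ := h.fin (N + 1)
  let W : Submodule (MvPolynomial σ k) H := Submodule.span _ ((s0 ∪ s1 : Finset H) : Set H)
  have aux : ∀ s : Finset H, s ⊆ s0 ∪ s1 → ∀ x ∈ Submodule.span k (s : Set H), x ∈ W := by
    intro s hs x hx
    have : Submodule.span k (s : Set H) ≤ W.restrictScalars k := by
      rw [Submodule.span_le]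
      intro y hy
      exact Submodule.subset_span (hs hy)
    exact this hx
  refine ⟨W, ⟨_, rfl⟩, ?_⟩
  have key : ∀ j : ℕ, ∀ x ∈ Hn (N + j), x ∈ W := by
    intro j
    induction j using Nat.twoStepInduction with
    | zero => 
      intro x hx
      refine aux s0 Finset.subset_union_left x ?_
      rw [hs0]; simpa using hx
    | one => 
      intro x hx
      refine aux s1 Finset.subset_union_right x ?_
      rw [hs1]; simpa using hx
    | more j h1 _ =>
      intro x hx
      obtain ⟨y, hy, rfl⟩ := h.gen (N + j) (by simp) x (by
        convert hx using 2; push_cast; ring)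
      exact Submodule.sum_mem _ fun i _ => Submodule.smul_mem _ _ (h1 _ (hy i))
  intro n hn x hx
  refine key (n - N).toNat x ?_
  rwa [Int.toNat_of_nonneg (by omega), add_sub_cancel]

lemma GrData.sub_gen {Hn : ℤ → Submodule k H} {N : ℤ} (h : GrData (σ := σ) Hn N)
    (K : ℤ → Submodule k H) (hK : ∀ n, K n ≤ Hn n)
    (hKX : ∀ (i : σ) n, ∀ x ∈ K n, (X i : MvPolynomial σ k) • x ∈ K (n + 2)) :
    ∃ N', ∀ n ≥ N', ∀ x ∈ K (n + 2), ∃ y : σ → H, (∀ i, y i ∈ K n) ∧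
      x = ∑ i, (X i : MvPolynomial σ k) • y i := by
  classical
  obtain ⟨W, hWfg, hW⟩ := h.exists_fg
  have hWn : IsNoetherian (MvPolynomial σ k) W := isNoetherian_of_fg_of_noetherian W hWfg
  set G : Set H := {x | ∃ n ≥ N, x ∈ K n} with hG
  have hUW : Submodule.span (MvPolynomial σ k) G ≤ W := by
    rw [Submodule.span_le]
    rintro x ⟨n, hn, hx⟩
    exact hW n hn x (hK n hx)
  have hUfg := isNoetherian_submodule.1 hWn _ hUW
  obtain ⟨s, hsG, hs⟩ := (Submodule.fg_span_iff_fg_span_finset_subset G).1 hUfg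
  have hsn : ∀ x : H, ∃ n : ℤ, x ∈ s → N ≤ n ∧ x ∈ K n := by
    intro x
    by_cases hx : x ∈ s
    · obtain ⟨n, hn, hxn⟩ := hsG hx
      exact ⟨n, fun _ => ⟨hn, hxn⟩⟩
    · exact ⟨0, fun h => absurd h hx⟩
  choose deg hdeg using hsn
  obtain ⟨N1, hN1⟩ : ∃ N1 : ℤ, ∀ x ∈ s, deg x ≤ N1 := by
    obtain ⟨M, hM⟩ := (s.image deg).bddAbove
    exact ⟨M, fun x hx => hM (by exact_mod_cast Finset.mem_image_of_mem deg hx)⟩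
  set L : Submodule k H := Submodule.span k
    ((s : Set H) ∪ {z | ∃ (i : σ) (n : ℤ) (y : H), N ≤ n ∧ y ∈ K n ∧
      z = (X i : MvPolynomial σ k) • y}) with hL
  have hLX : ∀ i, ∀ x ∈ L, (X i : MvPolynomial σ k) • x ∈ L := by
    intro i x hx
    refine Submodule.span_induction ?_ ?_ ?_ ?_ hx
    · rintro x (hx | ⟨j, n, y, hn, hy, rfl⟩)
      · exact Submodule.subset_span (Or.inr ⟨i, deg x, x, (hdeg x hx).1, (hdeg x hx).2, rfl⟩)
      · exact Submodule.subset_span (Or.inr ⟨i, n + 2, _, by omega, hKX j n y hy, rfl⟩)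
    · rw [smul_zero]; exact L.zero_mem
    · intro x y _ _ hx hy
      rw [smul_add]; exact L.add_mem hx hy
    · intro a x _ hx
      rw [smul_comm]; exact L.smul_mem a hx
  have hUL : ∀ x ∈ Submodule.span (MvPolynomial σ k) G, x ∈ L := by
    rw [hs]
    intro x hx
    refine Submodule.span_induction ?_ ?_ ?_ ?_ hx
    · intro x hx
      exact Submodule.subset_span (Or.inl hx)
    · exact L.zero_mem
    · intro x y _ _ hx hy
      exact L.add_mem hx hy
    · intro a x _ hx
      exact smul_mem_of_X_stable L hLX a x hx
  refine ⟨max N N1, fun n hn x hx => ?_⟩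
  obtain ⟨π, hπ1, hπ0⟩ := h.proj (n + 2)
  let E : Submodule k H :=
    { carrier := {x | ∃ y : σ → H, (∀ i, y i ∈ K n) ∧ x = ∑ i, (X i : MvPolynomial σ k) • y i}
      zero_mem' := ⟨0, fun i => (K n).zero_mem, by simp⟩
      add_mem' := by
        rintro _ _ ⟨y, hy, rfl⟩ ⟨z, hz, rfl⟩
        exact ⟨y + z, fun i => (K n).add_mem (hy i) (hz i), by
          simp [smul_add, Finset.sum_add_distrib]⟩
      smul_mem' := by
        rintro a _ ⟨y, hy, rfl⟩
        refine ⟨a • y, fun i => (K n).smul_mem a (hy i), ?_⟩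
        rw [Finset.smul_sum]
        refine Finset.sum_congr rfl fun i _ => ?_
        rw [Pi.smul_apply, smul_comm] }
  have hLE : L ≤ E.comap π := by
    rw [hL, Submodule.span_le]
    rintro z (hz | ⟨i, m, y, hm, hy, rfl⟩)
    · have h1 := hdeg z hz
      have h2 := hN1 z hz
      have : π z = 0 := hπ0 (deg z) (by omega) z (hK _ h1.2)
      change π z ∈ E
      rw [this]; exact E.zero_mem
    · change π _ ∈ E
      have hmem := hKX i m y hy
      by_cases hmn : m = n
      · subst hmn
        rw [hπ1 _ (hK _ hmem)]
        refine ⟨Pi.single i y, fun j => ?_, ?_⟩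
        · by_cases hj : j = i
          · subst hj; simpa using hy
          · simp [Pi.single_eq_of_ne hj]
        · rw [Finset.sum_eq_single i]
          · simp
          · intro j _ hj; simp [Pi.single_eq_of_ne hj]
          · simp
      · rw [hπ0 (m + 2) (by omega) _ (hK _ hmem)]; exact E.zero_mem
  have hxL : x ∈ L := hUL x (Submodule.subset_span ⟨n + 2, by omega, hx⟩)
  have := hLE hxL
  change π x ∈ E at this
  rwa [hπ1 x (hK _ hx)] at this

lemma GrData.exists_regular {Hn : ℤ → Submodule k H} {N : ℤ} (h : GrData (σ := σ) Hn N) :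
    ∃ (e : ℕ) (p : MvPolynomial σ k), 0 < e ∧ p.IsHomogeneous e ∧ ∃ N' : ℤ, ∀ n ≥ N',
      ∀ x ∈ Hn n, p • x = 0 → x = 0 := by
  classical
  obtain ⟨W, hWfg, hW⟩ := h.exists_fg
  have hWn : Module.Finite (MvPolynomial σ k) W := Module.Finite.iff_fg.2 hWfg
  obtain ⟨e, p, he, hp, r, hr⟩ := exists_filter_regular (σ := σ) (k := k) W
  refine ⟨e, p, he, hp, ?_⟩
  let K : ℤ → Submodule k H := fun n =>
    { carrier := {x | x ∈ Hn n ∧ p • x = 0}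
      zero_mem' := ⟨(Hn n).zero_mem, smul_zero _⟩
      add_mem' := fun {x y} hx hy => ⟨(Hn n).add_mem hx.1 hy.1, by
        rw [smul_add, hx.2, hy.2, add_zero]⟩
      smul_mem' := fun a x hx => ⟨(Hn n).smul_mem a hx.1, by
        rw [smul_comm, hx.2, smul_zero]⟩ }
  obtain ⟨N1, hN1⟩ := h.sub_gen K (fun n x hx => hx.1) (fun i n x hx =>
    ⟨h.hX i n x hx.1, by rw [smul_comm, hx.2, smul_zero]⟩)
  set 𝔪 := Ideal.span (Set.range (X : σ → MvPolynomial σ k)) with h𝔪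
  have key : ∀ j : ℕ, ∀ n ≥ N1, ∀ x ∈ K (n + 2 * j),
      x ∈ 𝔪 ^ j • Submodule.span (MvPolynomial σ k) (K n : Set H) := by
    intro j
    induction j with
    | zero =>
      intro n hn x hx
      rw [pow_zero, Ideal.one_eq_top, Submodule.top_smul]
      exact Submodule.subset_span (by simpa using hx)
    | succ j ih =>
      intro n hn x hx
      obtain ⟨y, hy, rfl⟩ := hN1 (n + 2 * j) (by omega) x (by
        convert hx using 2; push_cast; ring)
      rw [pow_succ', Submodule.mul_smul]
      refine Submodule.sum_mem _ fun i _ => Submodule.smul_mem_smul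
        (Ideal.subset_span ⟨i, rfl⟩) (ih n hn _ (hy i))
  refine ⟨max N N1 + 2 * r, fun n hn x hx hpx => ?_⟩
  have h1 := key r (n - 2 * r) (by omega) x (by
    rw [sub_add_cancel]; exact ⟨hx, hpx⟩)
  have h2 : 𝔪 ^ r • Submodule.span (MvPolynomial σ k) (K (n - 2 * r) : Set H) ≤ ⊥ := by
    rw [Submodule.smul_le]
    intro q hq z hz
    refine Submodule.span_induction ?_ ?_ ?_ ?_ hz
    · intro z hz
      have hzW : z ∈ W := hW (n - 2 * r) (by omega) z hz.1
      have := hr ⟨z, hzW⟩ (Subtype.ext hz.2) q hq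
      simpa using congrArg Subtype.val this
    · simp
    · intro x y _ _ hx hy
      rw [smul_add]; exact Submodule.add_mem _ hx hy
    · intro a x _ hx
      rw [smul_comm]; exact Submodule.smul_mem _ _ hx
  simpa using h2 h1

end Graded
end SymGrowth

namespace SymGrowth

section Basic
variable {R : Type*} [CommRing R] {I : Type*}

/-- The graded piece of degree `n` of a graded free module. -/
def gr (R : Type*) [CommRing R] {I : Type*} (deg : I → ℤ) (n : ℤ) : Submodule R (I →₀ R) :=
  Finsupp.supported R R {i | deg i = n}

lemma mem_gr {deg : I → ℤ} {n : ℤ} {v : I →₀ R} :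
    v ∈ gr R deg n ↔ ∀ i, v i ≠ 0 → deg i = n := by
  rw [gr, Finsupp.mem_supported]
  constructor
  · intro h i hi
    exact h (by simpa using hi)
  · intro h i hi
    exact h i (by simpa using hi)

lemma single_mem_gr (deg : I → ℤ) (j : I) (a : R) : Finsupp.single j a ∈ gr R deg (deg j) := by
  rw [mem_gr]
  intro i hi
  by_cases h : j = i
  · rw [h]
  · rw [Finsupp.single_eq_of_ne (Ne.symm h)] at hi
    exact absurd rfl hi

/-- Homogeneous endomorphisms. -/
def Homog (deg : I → ℤ) (e : ℤ) (L : Module.End R (I →₀ R)) : Prop :=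
  ∀ n, ∀ v ∈ gr R deg n, L v ∈ gr R deg (n + e)

lemma homog_of_single {deg : I → ℤ} {e : ℤ} {L : Module.End R (I →₀ R)}
    (h : ∀ j, L (Finsupp.single j 1) ∈ gr R deg (deg j + e)) : Homog deg e L := by
  intro n v hv
  rw [← Finsupp.sum_single v, Finsupp.sum, map_sum]
  refine Submodule.sum_mem _ fun j hj => ?_
  have hj' : deg j = n := mem_gr.1 hv j (by simpa using hj)
  have : Finsupp.single j (v j) = v j • Finsupp.single j (1 : R) := by simp
  rw [this, map_smul, ← hj']
  exact Submodule.smul_mem _ _ (h j)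

lemma Homog.mul {deg : I → ℤ} {e f : ℤ} {L M : Module.End R (I →₀ R)} (hL : Homog deg e L)
    (hM : Homog deg f M) : Homog deg (e + f) (L * M) := by
  intro n v hv
  have := hL _ _ (hM _ _ hv)
  rwa [show n + f + e = n + (e + f) by ring] at this

lemma Homog.one {deg : I → ℤ} : Homog deg 0 (1 : Module.End R (I →₀ R)) := by
  intro n v hv
  simpa using hv

lemma Homog.add {deg : I → ℤ} {e : ℤ} {L M : Module.End R (I →₀ R)} (hL : Homog deg e L)
    (hM : Homog deg e M) : Homog deg e (L + M) := fun n v hv =>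
  Submodule.add_mem _ (hL n v hv) (hM n v hv)

lemma Homog.sub {deg : I → ℤ} {e : ℤ} {L M : Module.End R (I →₀ R)} (hL : Homog deg e L)
    (hM : Homog deg e M) : Homog deg e (L - M) := fun n v hv =>
  Submodule.sub_mem _ (hL n v hv) (hM n v hv)

lemma Homog.neg {deg : I → ℤ} {e : ℤ} {L : Module.End R (I →₀ R)} (hL : Homog deg e L) :
    Homog deg e (-L) := fun n v hv =>
  Submodule.neg_mem _ (hL n v hv)

lemma Homog.smul {deg : I → ℤ} {e : ℤ} {L : Module.End R (I →₀ R)} (a : R)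
    (hL : Homog deg e L) : Homog deg e (a • L) := fun n v hv =>
  Submodule.smul_mem _ a (hL n v hv)

lemma Homog.zero {deg : I → ℤ} {e : ℤ} : Homog deg e (0 : Module.End R (I →₀ R)) :=
  fun _ _ _ => Submodule.zero_mem _

/-- Projection to the graded piece of degree `n`. -/
noncomputable def pr (R : Type*) [CommRing R] {I : Type*} (deg : I → ℤ) (n : ℤ) :
    Module.End R (I →₀ R) where
  toFun v := by classical exact v.filter (fun i => deg i = n)
  map_add' := by intros; exact Finsupp.filter_add
  map_smul' := by intros; exact Finsupp.filter_smul

lemma pr_apply (deg : I → ℤ) (n : ℤ) (v : I →₀ R) (i : I) [Decidable (deg i = n)] :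
    pr R deg n v i = if deg i = n then v i else 0 := by
  classical
  simp only [pr, LinearMap.coe_mk, AddHom.coe_mk, Finsupp.filter_apply]
  congr

lemma pr_mem (deg : I → ℤ) (n : ℤ) (v : I →₀ R) : pr R deg n v ∈ gr R deg n := by
  classical
  rw [mem_gr]
  intro i hi
  rw [pr_apply] at hi
  by_contra h
  simp [h] at hi

lemma pr_of_mem {deg : I → ℤ} {n : ℤ} {v : I →₀ R} (hv : v ∈ gr R deg n) :
    pr R deg n v = v := by
  classical
  ext i
  rw [pr_apply]
  split_ifs with h
  · rfl
  · by_contra h'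
    exact h (mem_gr.1 hv i (Ne.symm h'))

lemma pr_of_mem_ne {deg : I → ℤ} {n m : ℤ} (hmn : m ≠ n) {v : I →₀ R} (hv : v ∈ gr R deg m) :
    pr R deg n v = 0 := by
  classical
  ext i
  rw [pr_apply]
  split_ifs with h
  · by_contra h'
    exact hmn ((mem_gr.1 hv i h').symm.trans h)
  · rfl

lemma Homog.pr_comm {deg : I → ℤ} {e : ℤ} {L : Module.End R (I →₀ R)} (hL : Homog deg e L)
    (n : ℤ) (v : I →₀ R) : L (pr R deg n v) = pr R deg (n + e) (L v) := by
  induction v using Finsupp.induction_linear with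
  | zero => simp
  | add v w hv hw => simp only [map_add, hv, hw]
  | single j a =>
    have h1 := single_mem_gr deg j a
    have h2 := hL _ _ h1
    by_cases h : deg j = n
    · rw [h] at h1 h2
      rw [pr_of_mem h1, pr_of_mem h2]
    · rw [pr_of_mem_ne h h1, pr_of_mem_ne (by omega) h2, map_zero]

lemma eq_zero_of_pr {deg : I → ℤ} {v : I →₀ R} (h : ∀ n, pr R deg n v = 0) : v = 0 := by
  classical
  ext i
  have := DFunLike.congr_fun (h (deg i)) i
  rwa [pr_apply, if_pos rfl] at this

/-- A homogeneous boundary has a homogeneous preimage. -/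
lemma Homog.lift {deg : I → ℤ} {e : ℤ} {L : Module.End R (I →₀ R)} (hL : Homog deg e L)
    {n m : ℤ} (hnm : n + e = m) {z u : I →₀ R} (hz : z ∈ gr R deg m) (h : L u = z) :
    ∃ u' ∈ gr R deg n, L u' = z := by
  refine ⟨pr R deg n u, pr_mem _ _ _, ?_⟩
  rw [hL.pr_comm, h, hnm, pr_of_mem hz]

/-- Pairs. -/
noncomputable def pair (v w : I →₀ R) : I ⊕ I →₀ R :=
  (Finsupp.sumFinsuppLEquivProdFinsupp R).symm (v, w)

@[simp] lemma pair_inl (v w : I →₀ R) (i : I) : pair v w (Sum.inl i) = v i := by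
  simp [pair]

@[simp] lemma pair_inr (v w : I →₀ R) (i : I) : pair v w (Sum.inr i) = w i := by
  simp [pair]

lemma exists_pair (z : I ⊕ I →₀ R) : ∃ v w, z = pair v w := by
  refine ⟨(Finsupp.sumFinsuppLEquivProdFinsupp R z).1,
    (Finsupp.sumFinsuppLEquivProdFinsupp R z).2, ?_⟩
  simp [pair]

lemma pair_inj {v w v' w' : I →₀ R} : pair v w = pair v' w' ↔ v = v' ∧ w = w' := by
  unfold pair
  rw [EmbeddingLike.apply_eq_iff_eq, Prod.mk.injEq]

lemma pair_add (v w v' w' : I →₀ R) : pair v w + pair v' w' = pair (v + v') (w + w') := by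
  ext i; rcases i with i | i <;> simp

lemma pair_sub (v w v' w' : I →₀ R) : pair v w - pair v' w' = pair (v - v') (w - w') := by
  ext i; rcases i with i | i <;> simp

lemma pair_smul (a : R) (v w : I →₀ R) : a • pair v w = pair (a • v) (a • w) := by
  ext i; rcases i with i | i <;> simp

@[simp] lemma pair_zero : pair (0 : I →₀ R) 0 = 0 := by
  simp only [pair]; exact map_zero _

lemma pair_eq_zero {v w : I →₀ R} : pair v w = 0 ↔ v = 0 ∧ w = 0 := by
  rw [← pair_zero, pair_inj]

/-- The linear map onto the second summand. -/
noncomputable def inrL (R I : Type*) [CommRing R] : (I →₀ R) →ₗ[R] (I ⊕ I →₀ R) :=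
  (Finsupp.sumFinsuppLEquivProdFinsupp R).symm.toLinearMap ∘ₗ LinearMap.inr R _ _

lemma inrL_apply (v : I →₀ R) : inrL R I v = pair 0 v := rfl

noncomputable def fstL (R I : Type*) [CommRing R] : (I ⊕ I →₀ R) →ₗ[R] (I →₀ R) :=
  LinearMap.fst R _ _ ∘ₗ (Finsupp.sumFinsuppLEquivProdFinsupp R).toLinearMap

lemma fstL_apply (v w : I →₀ R) : fstL R I (pair v w) = v := by
  simp [fstL, pair]

/-- Block endomorphisms. -/
noncomputable def blk (a b c d : Module.End R (I →₀ R)) : Module.End R (I ⊕ I →₀ R) :=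
  (Finsupp.sumFinsuppLEquivProdFinsupp R).symm.toLinearMap ∘ₗ
    ((a.coprod b).prod (c.coprod d)) ∘ₗ (Finsupp.sumFinsuppLEquivProdFinsupp R).toLinearMap

lemma blk_pair (a b c d : Module.End R (I →₀ R)) (v w : I →₀ R) :
    blk a b c d (pair v w) = pair (a v + b w) (c v + d w) := by
  simp [blk, pair]

lemma end_pair_ext {L M : Module.End R (I ⊕ I →₀ R)} (h : ∀ v w, L (pair v w) = M (pair v w)) :
    L = M := by
  apply LinearMap.ext
  intro z
  obtain ⟨v, w, rfl⟩ := exists_pair z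
  exact h v w

/-- Degrees on the cone of a map of degree `e`. -/
def cdeg (deg : I → ℤ) (e : ℤ) : I ⊕ I → ℤ := Sum.elim deg (fun i => deg i - (e - 1))

lemma pair_mem_gr {deg : I → ℤ} {e n : ℤ} {v w : I →₀ R} :
    pair v w ∈ gr R (cdeg deg e) n ↔ v ∈ gr R deg n ∧ w ∈ gr R deg (n + e - 1) := by
  simp only [mem_gr, Sum.forall, pair_inl, pair_inr, cdeg, Sum.elim_inl, Sum.elim_inr]
  refine and_congr Iff.rfl (forall_congr' fun i => imp_congr Iff.rfl ?_)
  constructor <;> intro h <;> omega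

lemma homog_blk {deg : I → ℤ} {e f : ℤ} {a b c d : Module.End R (I →₀ R)}
    (ha : Homog deg f a) (hb : Homog deg (f - e + 1) b) (hc : Homog deg (f + e - 1) c)
    (hd : Homog deg f d) : Homog (cdeg deg e) f (blk a b c d) := by
  intro n z hz
  obtain ⟨v, w, rfl⟩ := exists_pair z
  rw [pair_mem_gr] at hz
  rw [blk_pair, pair_mem_gr]
  have h1 := ha _ _ hz.1
  have h2 := hb _ _ hz.2
  have h3 := hc _ _ hz.1
  have h4 := hd _ _ hz.2
  rw [show n + e - 1 + (f - e + 1) = n + f by ring] at h2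
  rw [show n + (f + e - 1) = n + f + e - 1 by ring] at h3
  rw [show n + e - 1 + f = n + f + e - 1 by ring] at h4
  exact ⟨Submodule.add_mem _ h1 h2, Submodule.add_mem _ h3 h4⟩

/-- vectors with all coordinates in an ideal -/
def JF (I : Type*) (J : Ideal R) : Submodule R (I →₀ R) where
  carrier := {v | ∀ i, v i ∈ J}
  add_mem' := fun ha hb i => J.add_mem (ha i) (hb i)
  zero_mem' := fun _ => J.zero_mem
  smul_mem' := fun a _ hv i => J.mul_mem_left a (hv i)

lemma mem_JF {J : Ideal R} {v : I →₀ R} : v ∈ JF I J ↔ ∀ i, v i ∈ J := Iff.rfl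

lemma map_JF {J : Ideal R} (L : Module.End R (I →₀ R)) {v : I →₀ R} (hv : v ∈ JF I J) :
    L v ∈ JF I J := by
  rw [← Finsupp.sum_single v, Finsupp.sum, map_sum]
  refine Submodule.sum_mem _ fun j _ => ?_
  have : Finsupp.single j (v j) = v j • Finsupp.single j (1 : R) := by simp
  rw [this, map_smul]
  intro i
  exact J.mul_mem_right _ (hv j)

lemma pair_mem_JF {J : Ideal R} {v w : I →₀ R} :
    pair v w ∈ JF (I ⊕ I) J ↔ v ∈ JF I J ∧ w ∈ JF I J := by
  simp [mem_JF, Sum.forall]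

lemma JF_mono {J J' : Ideal R} (h : J ≤ J') : JF I J ≤ JF I J' := fun _ hv i => h (hv i)

/-- endomorphisms with values in `JF` -/
def JE (I : Type*) (J : Ideal R) : Submodule R (Module.End R (I →₀ R)) where
  carrier := {L | ∀ v, L v ∈ JF I J}
  add_mem' := fun ha hb v => (JF I J).add_mem (ha v) (hb v)
  zero_mem' := fun _ => (JF I J).zero_mem
  smul_mem' := fun a _ h v => (JF I J).smul_mem a (h v)

lemma mem_JE {J : Ideal R} {L : Module.End R (I →₀ R)} : L ∈ JE I J ↔ ∀ v, L v ∈ JF I J := Iff.rfl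

lemma JE_mul_left {J : Ideal R} (M : Module.End R (I →₀ R)) {L : Module.End R (I →₀ R)}
    (h : L ∈ JE I J) : M * L ∈ JE I J := fun v => map_JF M (h v)

lemma JE_mul_right {J : Ideal R} (M : Module.End R (I →₀ R)) {L : Module.End R (I →₀ R)}
    (h : L ∈ JE I J) : L * M ∈ JE I J := fun v => h (M v)

lemma JE_mono {J J' : Ideal R} (h : J ≤ J') : JE I J ≤ JE I J' := fun _ hv i => JF_mono h (hv i)

end Basic

section Red
variable {B k : Type*} [CommRing B] [Field k] [Algebra B k] {I : Type*}

/-- coordinatewise reduction -/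
noncomputable def rho (k : Type*) {B : Type*} [CommRing B] [Field k] [Algebra B k] {I : Type*} :
    (I →₀ B) →ₗ[B] (I →₀ k) :=
  Finsupp.mapRange.linearMap (Algebra.linearMap B k)

lemma rho_apply (v : I →₀ B) (i : I) : rho k v i = algebraMap B k (v i) := by
  simp [rho]

lemma rho_smul (a : B) (v : I →₀ B) : rho k (a • v) = algebraMap B k a • rho k v := by
  rw [map_smul, algebraMap_smul]

lemma rho_surj (hk : Function.Surjective (algebraMap B k)) :
    Function.Surjective (rho k : (I →₀ B) → (I →₀ k)) :=
  Finsupp.mapRange_surjective _ (map_zero _) hk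

lemma rho_eq_zero {v : I →₀ B} : rho k v = 0 ↔ v ∈ JF I (RingHom.ker (algebraMap B k)) := by
  rw [mem_JF, Finsupp.ext_iff]
  simp [rho_apply, RingHom.mem_ker]

lemma rho_mem_gr {deg : I → ℤ} {n : ℤ} {v : I →₀ B} (hv : v ∈ gr B deg n) :
    rho k v ∈ gr k deg n := by
  rw [mem_gr] at *
  intro i hi
  refine hv i fun h => hi ?_
  rw [rho_apply, h, map_zero]

lemma exists_rho_gr (hk : Function.Surjective (algebraMap B k)) {deg : I → ℤ} {n : ℤ}
    {v : I →₀ k} (hv : v ∈ gr k deg n) : ∃ w ∈ gr B deg n, rho k w = v := by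
  classical
  obtain ⟨w, rfl⟩ := rho_surj hk v
  refine ⟨pr B deg n w, pr_mem _ _ _, ?_⟩
  ext i
  rw [rho_apply, pr_apply]
  split_ifs with h
  · rw [rho_apply]
  · rw [map_zero]
    by_contra h'
    exact h (mem_gr.1 hv i (Ne.symm h'))

/-- reduction of endomorphisms -/
noncomputable def red (k : Type*) {B : Type*} [CommRing B] [Field k] [Algebra B k] {I : Type*}
    (L : Module.End B (I →₀ B)) : Module.End k (I →₀ k) :=
  Finsupp.linearCombination k (fun j => rho k (L (Finsupp.single j 1)))

lemma red_rho (L : Module.End B (I →₀ B)) (v : I →₀ B) : red k L (rho k v) = rho k (L v) := by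
  induction v using Finsupp.induction_linear with
  | zero => simp
  | add v w hv hw => simp only [map_add, hv, hw]
  | single j a =>
    have h1 : rho k (Finsupp.single j a) = Finsupp.single j (algebraMap B k a) := by
      simp [rho]
    have : Finsupp.single j a = a • Finsupp.single j (1 : B) := by simp
    rw [h1, red, Finsupp.linearCombination_single, this, map_smul, map_smul, algebraMap_smul]

lemma red_unique (hk : Function.Surjective (algebraMap B k)) {L : Module.End B (I →₀ B)}
    {M : Module.End k (I →₀ k)} (h : ∀ v, M (rho k v) = rho k (L v)) : red k L = M := by
  apply LinearMap.ext
  intro v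
  obtain ⟨v, rfl⟩ := rho_surj hk v
  rw [red_rho, h]

lemma red_mul (hk : Function.Surjective (algebraMap B k)) (L M : Module.End B (I →₀ B)) :
    red k (L * M) = red k L * red k M :=
  red_unique hk fun v => by simp [red_rho]

lemma red_add (hk : Function.Surjective (algebraMap B k)) (L M : Module.End B (I →₀ B)) :
    red k (L + M) = red k L + red k M :=
  red_unique hk fun v => by simp [red_rho]

lemma red_sub (hk : Function.Surjective (algebraMap B k)) (L M : Module.End B (I →₀ B)) :
    red k (L - M) = red k L - red k M :=
  red_unique hk fun v => by simp [red_rho]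

lemma red_neg (hk : Function.Surjective (algebraMap B k)) (L : Module.End B (I →₀ B)) :
    red k (-L) = -red k L :=
  red_unique hk fun v => by simp [red_rho]

lemma red_one (hk : Function.Surjective (algebraMap B k)) :
    red k (1 : Module.End B (I →₀ B)) = 1 :=
  red_unique hk fun v => by simp

lemma red_smul (hk : Function.Surjective (algebraMap B k)) (a : B) (L : Module.End B (I →₀ B)) :
    red k (a • L) = algebraMap B k a • red k L :=
  red_unique hk fun v => by simp [red_rho]

lemma red_zero (hk : Function.Surjective (algebraMap B k)) :
    red k (0 : Module.End B (I →₀ B)) = 0 :=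
  red_unique hk fun v => by simp

lemma red_eq_zero (hk : Function.Surjective (algebraMap B k)) {J : Ideal B}
    (hJ : J ≤ RingHom.ker (algebraMap B k)) {L : Module.End B (I →₀ B)} (hL : L ∈ JE I J) :
    red k L = 0 :=
  red_unique hk fun v => by
    rw [LinearMap.zero_apply, eq_comm, rho_eq_zero]
    exact JF_mono hJ (hL v)

lemma rho_pair (v w : I →₀ B) : rho k (pair v w) = pair (rho k v) (rho k w) := by
  ext i
  rcases i with i | i <;> simp [rho_apply]

lemma red_blk (hk : Function.Surjective (algebraMap B k)) (a b c d : Module.End B (I →₀ B)) :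
    red k (blk a b c d) = blk (red k a) (red k b) (red k c) (red k d) :=
  red_unique hk fun z => by
    obtain ⟨v, w, rfl⟩ := exists_pair z
    rw [rho_pair, blk_pair, blk_pair, rho_pair]
    simp only [red_rho, map_add]

lemma red_homog {deg : I → ℤ} {e : ℤ}
    {L : Module.End B (I →₀ B)} (hL : Homog deg e L) : Homog deg e (red k L) := by
  apply homog_of_single
  intro j
  rw [red, Finsupp.linearCombination_single, one_smul]
  exact rho_mem_gr (hL _ _ (single_mem_gr deg j 1))

end Red
end SymGrowth

namespace SymGrowth

section HomV
variable {k : Type*} [Field k] {V V' : Type*} [AddCommGroup V] [Module k V] [AddCommGroup V']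
  [Module k V']

/-- homology of an endomorphism -/
abbrev Hom (d : Module.End k V) : Type _ :=
  LinearMap.ker d ⧸ (LinearMap.range d).comap (LinearMap.ker d).subtype

/-- class of a cycle -/
noncomputable def cls {d : Module.End k V} (z : V) (hz : d z = 0) : Hom d :=
  Submodule.Quotient.mk ⟨z, hz⟩

lemma cls_eq_zero {d : Module.End k V} {z : V} {hz : d z = 0} :
    cls z hz = 0 ↔ ∃ u, d u = z := by
  rw [cls, Submodule.Quotient.mk_eq_zero]
  rfl

lemma cls_eq {d : Module.End k V} {z z' : V} {hz : d z = 0} {hz' : d z' = 0} :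
    cls z hz = cls z' hz' ↔ ∃ u, d u = z - z' := by
  rw [cls, cls, Submodule.Quotient.eq]
  rfl

lemma exists_cls {d : Module.End k V} (x : Hom d) : ∃ z hz, x = cls z hz := by
  obtain ⟨⟨z, hz⟩, rfl⟩ := Submodule.Quotient.mk_surjective _ x
  exact ⟨z, hz, rfl⟩

/-- induced map on homology -/
noncomputable def mapH {d : Module.End k V} {d' : Module.End k V'}
    (f : V →ₗ[k] V') (h1 : ∀ z, d z = 0 → d' (f z) = 0)
    (h2 : ∀ u, ∃ u', d' u' = f (d u)) : Hom d →ₗ[k] Hom d' :=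
  Submodule.mapQ _ _ (f.restrict (p := LinearMap.ker d) (q := LinearMap.ker d') h1) (by
    rintro ⟨z, hz⟩ ⟨u, hu⟩
    obtain ⟨u', hu'⟩ := h2 u
    refine ⟨u', hu'.trans ?_⟩
    exact congrArg f hu)

lemma mapH_cls {d : Module.End k V} {d' : Module.End k V'}
    (f : V →ₗ[k] V') (h1 : ∀ z, d z = 0 → d' (f z) = 0)
    (h2 : ∀ u, ∃ u', d' u' = f (d u)) (z : V) (hz : d z = 0) :
    mapH f h1 h2 (cls z hz) = cls (f z) (h1 z hz) := rfl

lemma comap_subtype_fg (Q P : Submodule k V) (hP : P.FG) : (P.comap Q.subtype).FG := by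
  have h1 : Module.Finite k P := Module.Finite.iff_fg.2 hP
  rw [← Module.Finite.iff_fg]
  refine Module.Finite.of_injective
    ((Q.subtype.restrict (p := P.comap Q.subtype) (q := P) (fun x hx => hx))) ?_
  intro x y hxy
  have h2 := congrArg Subtype.val hxy
  exact Subtype.ext (Subtype.ext h2)

end HomV

section Hom
variable {k : Type*} [Field k] {I I' : Type*}

/-- graded pieces of homology -/
noncomputable def Hn (deg : I → ℤ) (d : Module.End k (I →₀ k)) (n : ℤ) : Submodule k (Hom d) :=
  ((gr k deg n).comap (LinearMap.ker d).subtype).map (Submodule.mkQ _)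

lemma mem_Hn {deg : I → ℤ} {d : Module.End k (I →₀ k)} {n : ℤ} {x : Hom d} :
    x ∈ Hn deg d n ↔ ∃ z, ∃ hz : d z = 0, z ∈ gr k deg n ∧ x = cls z hz := by
  rw [Hn, Submodule.mem_map]
  constructor
  · rintro ⟨⟨z, hz⟩, h, rfl⟩
    exact ⟨z, hz, h, rfl⟩
  · rintro ⟨z, hz, h, rfl⟩
    exact ⟨⟨z, hz⟩, h, rfl⟩

lemma cls_mem_Hn {deg : I → ℤ} {d : Module.End k (I →₀ k)} {n : ℤ} {z : I →₀ k} (hz : d z = 0)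
    (h : z ∈ gr k deg n) : cls z hz ∈ Hn deg d n := mem_Hn.2 ⟨z, hz, h, rfl⟩

lemma gr_fg {deg : I → ℤ} {n : ℤ} (hfin : {i | deg i = n}.Finite) : (gr k deg n).FG := by
  rw [gr, Finsupp.supported_eq_span_single]
  exact Submodule.fg_span (hfin.image _)

lemma Hn_fg {deg : I → ℤ} {n : ℤ} (d : Module.End k (I →₀ k)) (hfin : {i | deg i = n}.Finite) :
    (Hn deg d n).FG := by
  exact Submodule.FG.map _ (comap_subtype_fg _ _ (gr_fg hfin))

/-- dimension of homology -/
noncomputable def bet (deg : I → ℤ) (d : Module.End k (I →₀ k)) (n : ℤ) : ℕ :=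
  Module.finrank k (Hn deg d n)

lemma bet_eq_zero {deg : I → ℤ} {d : Module.End k (I →₀ k)} {n : ℤ}
    (hfin : {i | deg i = n}.Finite) :
    bet deg d n = 0 ↔ ∀ z ∈ gr k deg n, d z = 0 → ∃ u, d u = z := by
  have : Module.Finite k (Hn deg d n) := Module.Finite.iff_fg.2 (Hn_fg d hfin)
  rw [bet, Submodule.finrank_eq_zero]
  constructor
  · intro h z hz hdz
    have h1 := cls_mem_Hn hdz hz
    rw [h, Submodule.mem_bot, cls_eq_zero] at h1
    exact h1
  · intro h
    rw [eq_bot_iff]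
    intro x hx
    obtain ⟨z, hz, hzn, rfl⟩ := mem_Hn.1 hx
    rw [Submodule.mem_bot, cls_eq_zero]
    exact h z hzn hz

lemma finrank_map_add {U W : Type*} [AddCommGroup U] [Module k U] [AddCommGroup W] [Module k W]
    (f : U →ₗ[k] W) (P : Submodule k U) (hP : P.FG) :
    Module.finrank k (P.map f) + Module.finrank k (P ⊓ LinearMap.ker f : Submodule k U) =
      Module.finrank k P := by
  have : Module.Finite k P := Module.Finite.iff_fg.2 hP
  have h := LinearMap.finrank_range_add_finrank_ker (f.domRestrict P)
  rw [LinearMap.range_domRestrict, LinearMap.ker_domRestrict] at h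
  rw [← h]
  congr 1
  rw [inf_comm]
  have e := (Submodule.comapSubtypeEquivOfLe (p := P ⊓ LinearMap.ker f) (q := P) inf_le_left)
  rw [inf_comm, ← e.finrank_eq]
  have : Submodule.comap P.subtype (P ⊓ LinearMap.ker f) =
      Submodule.comap P.subtype (LinearMap.ker f) := by
    ext x; simp
  rw [this]

section Cone
variable {deg : I → ℤ} {d g : Module.End k (I →₀ k)} {e : ℤ}

/-- differential on the cone of `g` -/
noncomputable def cone (d g : Module.End k (I →₀ k)) : Module.End k (I ⊕ I →₀ k) :=
  blk d 0 g (-d)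

lemma cone_pair (v w : I →₀ k) : cone d g (pair v w) = pair (d v) (g v - d w) := by
  simp [cone, blk_pair, sub_eq_add_neg]

lemma cone_pair_eq_zero {v w : I →₀ k} : cone d g (pair v w) = 0 ↔ d v = 0 ∧ d w = g v := by
  rw [cone_pair, pair_eq_zero, sub_eq_zero, eq_comm (a := g v)]

lemma cdeg_finite (hfin : ∀ n, {i | deg i = n}.Finite) (n : ℤ) :
    {i | cdeg deg e i = n}.Finite := by
  refine (((hfin n).image Sum.inl).union ((hfin (n + e - 1)).image Sum.inr)).subset ?_
  rintro (i | i) hi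
  · exact Or.inl ⟨i, hi, rfl⟩
  · refine Or.inr ⟨i, ?_, rfl⟩
    simp only [cdeg, Set.mem_ofPred_eq, Sum.elim_inr] at hi ⊢
    omega

lemma cone_a (hfin : ∀ n, {i | deg i = n}.Finite) (hd : Homog deg 1 d) (hg : Homog deg e g)
    (hdg : ∀ v, d (g v) = g (d v)) (n : ℤ) :
    bet deg d n ≤ bet deg d (n + e) + bet (cdeg deg e) (cone d g) n := by
  let G : Hom d →ₗ[k] Hom d := mapH g (fun z hz => by rw [hdg, hz, map_zero])
    (fun u => ⟨g u, hdg u⟩)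
  let P : Hom (cone d g) →ₗ[k] Hom d := mapH (fstL k I)
    (fun z hz => by
      obtain ⟨v, w, rfl⟩ := exists_pair z
      rw [fstL_apply]; exact (cone_pair_eq_zero.1 hz).1)
    (fun u => by
      obtain ⟨v, w, rfl⟩ := exists_pair u
      rw [cone_pair, fstL_apply]; exact ⟨v, rfl⟩)
  have f1 := Hn_fg d (hfin n)
  have f2 := Hn_fg d (hfin (n + e))
  have f3 := Hn_fg (cone d g) (cdeg_finite (e := e) hfin n)
  have : Module.Finite k (Hn deg d (n + e)) := Module.Finite.iff_fg.2 f2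
  have : Module.Finite k (Hn (cdeg deg e) (cone d g) n) := Module.Finite.iff_fg.2 f3
  have : Module.Finite k ((Hn (cdeg deg e) (cone d g) n).map P) :=
    Module.Finite.iff_fg.2 (f3.map P)
  rw [bet, ← finrank_map_add G _ f1]
  refine add_le_add (Submodule.finrank_mono ?_) ((Submodule.finrank_mono ?_).trans
    (Submodule.finrank_map_le P _))
  · rintro _ ⟨x, hx, rfl⟩
    obtain ⟨z, hz, hzn, rfl⟩ := mem_Hn.1 hx
    exact cls_mem_Hn _ (hg _ _ hzn)
  · rintro x ⟨hx, hx0⟩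
    obtain ⟨z, hz, hzn, rfl⟩ := mem_Hn.1 hx
    rw [SetLike.mem_coe, LinearMap.mem_ker, mapH_cls, cls_eq_zero] at hx0
    obtain ⟨w, hw⟩ := hx0
    obtain ⟨w, hwn, hw⟩ := hd.lift (n := n + e - 1) (m := n + e) (by ring) (hg _ _ hzn) hw
    refine ⟨cls (pair z w) (cone_pair_eq_zero.2 ⟨hz, hw⟩), cls_mem_Hn _ ?_, ?_⟩
    · exact pair_mem_gr.2 ⟨hzn, hwn⟩
    · rw [mapH_cls]
      congr 1
      exact fstL_apply z w

lemma cone_b (hfin : ∀ n, {i | deg i = n}.Finite) (hd : Homog deg 1 d) (hg : Homog deg e g)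
    (hdg : ∀ v, d (g v) = g (d v)) (n : ℤ)
    (hi1 : ∀ z ∈ gr k deg n, d z = 0 → (∃ u, d u = g z) → ∃ u, d u = z)
    (hi2 : ∀ z ∈ gr k deg (n - 1), d z = 0 → (∃ u, d u = g z) → ∃ u, d u = z) :
    bet (cdeg deg e) (cone d g) n + bet deg d (n - 1) ≤ bet deg d (n + e - 1) := by
  let G : Hom d →ₗ[k] Hom d := mapH g (fun z hz => by rw [hdg, hz, map_zero])
    (fun u => ⟨g u, hdg u⟩)
  let P : Hom d →ₗ[k] Hom (cone d g) := mapH (inrL k I)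
    (fun z hz => by
      rw [inrL_apply, cone_pair_eq_zero]; simpa using hz)
    (fun u => ⟨pair 0 (-u), by rw [cone_pair, inrL_apply]; simp⟩)
  have f1 := Hn_fg d (hfin (n - 1))
  have f2 := Hn_fg d (hfin (n + e - 1))
  have : Module.Finite k (Hn deg d (n + e - 1)) := Module.Finite.iff_fg.2 f2
  have : Module.Finite k ((Hn deg d (n + e - 1)).map P) :=
    Module.Finite.iff_fg.2 (f2.map P)
  have : Module.Finite k (Hn deg d (n + e - 1) ⊓ LinearMap.ker P : Submodule k (Hom d)) :=
    Submodule.finiteDimensional_inf_left _ _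
  have h1 : bet deg d (n - 1) = Module.finrank k ((Hn deg d (n - 1)).map G) := by
    rw [bet, ← finrank_map_add G _ f1]
    have : Hn deg d (n - 1) ⊓ LinearMap.ker G = ⊥ := by
      rw [eq_bot_iff]
      rintro x ⟨hx, hx0⟩
      obtain ⟨z, hz, hzn, rfl⟩ := mem_Hn.1 hx
      rw [SetLike.mem_coe, LinearMap.mem_ker, mapH_cls, cls_eq_zero] at hx0
      rw [Submodule.mem_bot, cls_eq_zero]
      exact hi2 z hzn hz hx0
    rw [this]; simp
  rw [h1, bet, bet, ← finrank_map_add P _ f2]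
  refine add_le_add (Submodule.finrank_mono ?_) (Submodule.finrank_mono ?_)
  · intro x hx
    obtain ⟨z, hz, hzn, rfl⟩ := mem_Hn.1 hx
    obtain ⟨v, w, rfl⟩ := exists_pair z
    obtain ⟨hv, hw⟩ := cone_pair_eq_zero.1 hz
    obtain ⟨hvn, hwn⟩ := pair_mem_gr.1 hzn
    obtain ⟨u, hu⟩ := hi1 v hvn hv ⟨w, hw⟩
    obtain ⟨u, hun, hu⟩ := hd.lift (n := n - 1) (m := n) (by ring) hvn hu
    have hc : d (w - g u) = 0 := by rw [map_sub, hdg, hu, hw, sub_self]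
    refine ⟨cls (w - g u) hc, cls_mem_Hn _ (Submodule.sub_mem _ hwn ?_), ?_⟩
    · have := hg _ _ hun
      rwa [show n - 1 + e = n + e - 1 by ring] at this
    · rw [mapH_cls, cls_eq]
      refine ⟨pair (-u) 0, ?_⟩
      rw [cone_pair, inrL_apply, pair_sub, pair_inj]
      simp [hu]
  · rintro _ ⟨x, hx, rfl⟩
    obtain ⟨z, hz, hzn, rfl⟩ := mem_Hn.1 hx
    refine ⟨cls_mem_Hn _ ?_, ?_⟩
    · have := hg _ _ hzn
      rwa [show n - 1 + e = n + e - 1 by ring] at this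
    · rw [SetLike.mem_coe, LinearMap.mem_ker, mapH_cls, mapH_cls, cls_eq_zero]
      exact ⟨pair z 0, by rw [cone_pair, inrL_apply, hz]; simp⟩

end Cone
end Hom
end SymGrowth

namespace SymGrowth

section Alg
variable {B E : Type*} [CommRing B] [Ring E] [Algebra B E]

lemma alg_sum1 {x : ℕ → B} {D : E} {T : ℕ → E} {s : Finset ℕ}
    (h : D * D = ∑ i ∈ s, x i • T i) : ∑ i ∈ s, x i • (D * T i - T i * D) = 0 := by
  have h1 : D * (D * D) - (D * D) * D = 0 := by rw [mul_assoc, sub_self]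
  rw [h] at h1
  rw [← h1, Finset.mul_sum, Finset.sum_mul, ← Finset.sum_sub_distrib]
  refine Finset.sum_congr rfl fun i _ => ?_
  rw [mul_smul_comm, smul_mul_assoc, smul_sub]

lemma alg_sum2 {x : ℕ → B} {D S : E} {T h : ℕ → E} {s : Finset ℕ}
    (hT : D * D = ∑ i ∈ s, x i • T i) (hs : D * S - S * D = ∑ i ∈ s, x i • h i) :
    ∑ i ∈ s, x i • (T i * S - S * T i - (D * h i + h i * D)) = 0 := by
  have e1 : (D * D) * S - S * (D * D) - (D * (D * S - S * D) + (D * S - S * D) * D)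
      = 0 := by noncomm_ring
  rw [hs, hT] at e1
  rw [← e1, Finset.mul_sum, Finset.sum_mul, Finset.mul_sum, Finset.sum_mul,
    ← Finset.sum_sub_distrib, ← Finset.sum_add_distrib, ← Finset.sum_sub_distrib]
  refine Finset.sum_congr rfl fun i _ => ?_
  simp only [mul_smul_comm, smul_mul_assoc, smul_sub, smul_add]

end Alg

section Ops
variable {B : Type*} [CommRing B] {I : Type*}

/-- the ideals generated by initial segments of a sequence -/
def Jx (x : ℕ → B) : ℕ → Ideal B
  | 0 => ⊥
  | c + 1 => Jx x c ⊔ Ideal.span {x c}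

lemma Jx_succ_le (x : ℕ → B) (c : ℕ) : Jx x c ≤ Jx x (c + 1) := le_sup_left

lemma Jx_last (x : ℕ → B) (c : ℕ) : x c ∈ Jx x (c + 1) :=
  Ideal.mem_sup_right (Ideal.mem_span_singleton_self _)

lemma mem_Jx_succ {x : ℕ → B} {c : ℕ} {b : B} :
    b ∈ Jx x (c + 1) ↔ ∃ p, b - x c * p ∈ Jx x c := by
  rw [Jx, Submodule.mem_sup]
  constructor
  · rintro ⟨y, hy, z, hz, rfl⟩
    obtain ⟨p, rfl⟩ := Ideal.mem_span_singleton.1 hz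
    exact ⟨p, by simpa using hy⟩
  · rintro ⟨p, hp⟩
    exact ⟨_, hp, x c * p, Ideal.mem_span_singleton.2 ⟨p, rfl⟩, by ring⟩

lemma mem_Jx {x : ℕ → B} {c : ℕ} {b : B} :
    b ∈ Jx x c ↔ ∃ a : ℕ → B, b = ∑ i ∈ Finset.range c, x i * a i := by
  induction c generalizing b with
  | zero => simp [Jx]
  | succ c ih =>
    rw [mem_Jx_succ]
    constructor
    · rintro ⟨p, hp⟩
      obtain ⟨a, ha⟩ := ih.1 hp
      refine ⟨fun i => if i = c then p else a i, ?_⟩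
      rw [Finset.sum_range_succ, eq_add_of_sub_eq ha]; simp only [if_true]
      congr 1
      refine Finset.sum_congr rfl fun i hi => ?_
      rw [if_neg (Finset.mem_range.1 hi).ne]
    · rintro ⟨a, rfl⟩
      refine ⟨a c, ih.2 ⟨a, ?_⟩⟩
      rw [Finset.sum_range_succ]; ring

/-- regular sequences -/
def RegUpTo (x : ℕ → B) (c : ℕ) : Prop :=
  ∀ i < c, ∀ b, x i * b ∈ Jx x i → b ∈ Jx x i

lemma RegUpTo.pred {x : ℕ → B} {c : ℕ} (h : RegUpTo x (c + 1)) : RegUpTo x c :=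
  fun i hi => h i (by omega)

lemma syz_last {x : ℕ → B} {c : ℕ} (h : RegUpTo x (c + 1)) {a : ℕ → B}
    (ha : ∑ i ∈ Finset.range (c + 1), x i * a i = 0) : a c ∈ Jx x c := by
  refine h c (by omega) _ (mem_Jx.2 ⟨fun i => - a i, ?_⟩)
  rw [Finset.sum_range_succ] at ha
  simp only [mul_neg, Finset.sum_neg_distrib]
  exact eq_neg_of_add_eq_zero_right ha

lemma syz {x : ℕ → B} {c : ℕ} (h : RegUpTo x c) {a : ℕ → B}
    (ha : ∑ i ∈ Finset.range c, x i * a i = 0) : ∀ i < c, a i ∈ Jx x c := by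
  induction c generalizing a with
  | zero => intro i hi; omega
  | succ c ih =>
    have h1 := syz_last h ha
    obtain ⟨b, hb⟩ := mem_Jx.1 h1
    have h2 : ∑ i ∈ Finset.range c, x i * (a i + x c * b i) = 0 := by
      rw [Finset.sum_range_succ, hb] at ha
      rw [← ha, Finset.mul_sum, ← Finset.sum_add_distrib]
      refine Finset.sum_congr rfl fun i _ => by ring
    intro i hi
    rcases Nat.lt_succ_iff_lt_or_eq.1 hi with hi | rfl
    · have h3 := Jx_succ_le x c (ih h.pred h2 i hi)
      have := (Jx x (c + 1)).sub_mem h3 ((Jx x (c + 1)).mul_mem_right (b i) (Jx_last x c))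
      simpa using this
    · exact Jx_succ_le x _ h1

lemma syz_end {x : ℕ → B} {c : ℕ} (h : RegUpTo x c) {L : ℕ → Module.End B (I →₀ B)}
    (ha : ∑ i ∈ Finset.range c, x i • L i = 0) : ∀ i < c, L i ∈ JE I (Jx x c) := by
  intro i hi v s
  refine syz h (a := fun i => L i v s) ?_ i hi
  have := DFunLike.congr_fun (LinearMap.congr_fun ha v) s
  simpa [LinearMap.sum_apply, Finsupp.finsetSum_apply] using this

lemma syz_end_last {x : ℕ → B} {c : ℕ} (h : RegUpTo x (c + 1)) {L : ℕ → Module.End B (I →₀ B)}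
    (ha : ∑ i ∈ Finset.range (c + 1), x i • L i = 0) : L c ∈ JE I (Jx x c) := by
  intro v s
  refine syz_last h (a := fun i => L i v s) ?_
  have := DFunLike.congr_fun (LinearMap.congr_fun ha v) s
  simpa only [LinearMap.sum_apply, Finsupp.finsetSum_apply, LinearMap.smul_apply,
    Finsupp.smul_apply, smul_eq_mul, LinearMap.zero_apply, Finsupp.zero_apply] using this

lemma decomp {x : ℕ → B} {c : ℕ} {deg : I → ℤ} {e : ℤ} {L : Module.End B (I →₀ B)}
    (hL : Homog deg e L) (hJ : L ∈ JE I (Jx x c)) :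
    ∃ h : ℕ → Module.End B (I →₀ B), (∀ i, Homog deg e (h i)) ∧
      L = ∑ i ∈ Finset.range c, x i • h i := by
  classical
  have key : ∀ b : B, ∃ a : ℕ → B, (b ∈ Jx x c → b = ∑ i ∈ Finset.range c, x i * a i) ∧
      (b = 0 → a = 0) := by
    intro b
    by_cases hb : b = 0
    · exact ⟨0, fun _ => by simp [hb], fun _ => rfl⟩
    · by_cases hb' : b ∈ Jx x c
      · obtain ⟨a, ha⟩ := mem_Jx.1 hb'
        exact ⟨a, fun _ => ha, fun h => absurd h hb⟩
      · exact ⟨0, fun h => absurd h hb', fun _ => rfl⟩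
  choose a ha ha0 using key
  have ha00 : ∀ i, a 0 i = 0 := fun i => congrFun (ha0 0 rfl) i
  refine ⟨fun i => Finsupp.linearCombination B
    (fun j => (L (Finsupp.single j 1)).mapRange (fun b => a b i) (ha00 i)), ?_, ?_⟩
  · intro i
    apply homog_of_single
    intro j
    rw [Finsupp.linearCombination_single, one_smul, mem_gr]
    intro s hs
    refine mem_gr.1 (hL _ _ (single_mem_gr deg j 1)) s fun h => hs ?_
    rw [Finsupp.mapRange_apply, h, ha00]
  · apply Finsupp.lhom_ext'
    intro j
    apply LinearMap.ext_ring
    ext s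
    simp only [LinearMap.comp_apply, Finsupp.lsingle_apply, LinearMap.sum_apply,
      LinearMap.smul_apply, Finsupp.linearCombination_single, one_smul, Finsupp.finsetSum_apply,
      Finsupp.smul_apply, Finsupp.mapRange_apply, smul_eq_mul]
    exact ha _ (hJ _ s)

/-- A graded free module with an endomorphism of degree one which is an exact differential modulo
the ideal generated by the first `c` elements of the sequence `x`. -/
structure Cx (x : ℕ → B) (c : ℕ) (deg : I → ℤ) (D : Module.End B (I →₀ B)) : Prop where
  fin : ∀ n, {i | deg i = n}.Finite
  hD : Homog deg 1 D
  sq : D * D ∈ JE I (Jx x c)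
  ex : ∀ v, D v ∈ JF I (Jx x c) → ∃ u, v - D u ∈ JF I (Jx x c)

/-- The operators `T` -/
structure Op (x : ℕ → B) (c : ℕ) (deg : I → ℤ) (D : Module.End B (I →₀ B))
    (T : ℕ → Module.End B (I →₀ B)) : Prop where
  hT : ∀ i, Homog deg 2 (T i)
  sq : D * D = ∑ i ∈ Finset.range c, x i • T i

variable {x : ℕ → B} {c : ℕ} {deg : I → ℤ} {D : Module.End B (I →₀ B)}
  {T : ℕ → Module.End B (I →₀ B)}

lemma Cx.exists_op (h : Cx x c deg D) : ∃ T, Op x c deg D T := by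
  have h2 : Homog deg 2 (D * D) := h.hD.mul h.hD
  obtain ⟨T, hT, hs⟩ := decomp h2 h.sq
  exact ⟨T, hT, hs⟩

lemma Op.comm_sum (hT : Op x c deg D T) :
    ∑ i ∈ Finset.range c, x i • (D * T i - T i * D) = 0 := by
  exact alg_sum1 (E := Module.End B (I →₀ B)) hT.sq

lemma Op.comm (hx : RegUpTo x c) (hT : Op x c deg D T) :
    ∀ i < c, D * T i - T i * D ∈ JE I (Jx x c) :=
  syz_end hx hT.comm_sum

lemma Op.comm_last (hx : RegUpTo x (c + 1)) (hT : Op x (c + 1) deg D T) :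
    D * T c - T c * D ∈ JE I (Jx x c) :=
  syz_end_last (L := fun i => D * T i - T i * D) hx hT.comm_sum

lemma Op.comm2 (hx : RegUpTo x c) (hD : Homog deg 1 D) (hT : Op x c deg D T) :
    ∀ i < c, ∀ j < c, ∃ h : Module.End B (I →₀ B),
      T i * T j - T j * T i - (D * h + h * D) ∈ JE I (Jx x c) := by
  intro i hi j hj
  have hh : Homog deg 3 (D * T j - T j * D) := by
    have h1 := hD.mul (hT.hT j)
    have h2 := (hT.hT j).mul hD
    exact h1.sub h2
  obtain ⟨h, -, hs⟩ := decomp hh (hT.comm hx j hj)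
  refine ⟨h i, ?_⟩
  refine syz_end (L := fun i => T i * T j - T j * T i - (D * h i + h i * D)) hx ?_ i hi
  exact alg_sum2 (E := Module.End B (I →₀ B)) hT.sq hs

/-- `v ∈ J_{c+1}` splits -/
lemma mem_JF_succ {v : I →₀ B} (hv : v ∈ JF I (Jx x (c + 1))) :
    ∃ p, v - x c • p ∈ JF I (Jx x c) := by
  classical
  have key : ∀ b : B, ∃ p, (b ∈ Jx x (c + 1) → b - x c * p ∈ Jx x c) ∧ (b = 0 → p = 0) := by
    intro b
    by_cases hb : b = 0
    · exact ⟨0, fun _ => by simp [hb], fun _ => rfl⟩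
    · by_cases hb' : b ∈ Jx x (c + 1)
      · obtain ⟨p, hp⟩ := mem_Jx_succ.1 hb'
        exact ⟨p, fun _ => hp, fun h => absurd h hb⟩
      · exact ⟨0, fun h => absurd h hb', fun _ => rfl⟩
  choose p hp hp0 using key
  refine ⟨v.mapRange p (hp0 0 rfl), fun i => ?_⟩
  simpa using hp _ (hv i)

/-- The complex `G` -/
noncomputable def gD (y : B) (D T : Module.End B (I →₀ B)) : Module.End B (I ⊕ I →₀ B) :=
  blk D (-(y • 1)) T (-D)

lemma gD_pair (y : B) (D T : Module.End B (I →₀ B)) (v w : I →₀ B) :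
    gD y D T (pair v w) = pair (D v - y • w) (T v - D w) := by
  simp [gD, blk_pair, sub_eq_add_neg]

lemma exists_G (hx : RegUpTo x (c + 1)) (h : Cx x (c + 1) deg D) (hT : Op x (c + 1) deg D T) :
    Cx x c (cdeg deg 2) (gD (x c) D (T c)) ∧ ∃ τ : ℕ → Module.End B (I ⊕ I →₀ B),
      Op x c (cdeg deg 2) (gD (x c) D (T c)) τ ∧
      ∀ i w, τ i (pair 0 w) = pair 0 (T i w) := by
  have hh : Homog deg 3 (D * T c - T c * D) := by
    have h1 := h.hD.mul (hT.hT c)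
    have h2 := (hT.hT c).mul h.hD
    exact h1.sub h2
  obtain ⟨g, hg, hs⟩ := decomp hh (hT.comm_last hx)
  have hsq : ∀ v, D (D v) = ∑ i ∈ Finset.range c, x i • T i v + x c • T c v := by
    intro v
    have := LinearMap.congr_fun hT.sq v
    rw [Finset.sum_range_succ] at this
    simpa [LinearMap.sum_apply] using this
  have hsv : ∀ v, D (T c v) - T c (D v) = ∑ i ∈ Finset.range c, x i • g i v := by
    intro v
    have := LinearMap.congr_fun hs v
    simpa [LinearMap.sum_apply] using this
  have op : Op x c (cdeg deg 2) (gD (x c) D (T c)) (fun i => blk (T i) 0 (- g i) (T i)) := by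
    refine ⟨fun i => homog_blk (hT.hT i) Homog.zero ?_ (hT.hT i), ?_⟩
    · exact (hg i).neg
    · apply end_pair_ext
      intro v w
      simp only [Module.End.mul_apply, gD_pair, LinearMap.sum_apply, LinearMap.smul_apply,
        blk_pair, pair_smul]
      have : ∀ (s : Finset ℕ) (a b : ℕ → (I →₀ B)),
          ∑ i ∈ s, pair (a i) (b i) = pair (∑ i ∈ s, a i) (∑ i ∈ s, b i) := by
        classical
        intro s a b
        induction s using Finset.induction_on with
        | empty => simp
        | insert i s hi ih => rw [Finset.sum_insert hi, Finset.sum_insert hi, Finset.sum_insert hi,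
            ih, pair_add]
      rw [this, pair_inj]
      constructor
      · simp only [map_sub, hsq, map_smul, smul_sub, LinearMap.zero_apply, add_zero]
        abel
      · simp only [map_sub, map_smul, smul_add, LinearMap.neg_apply, smul_neg, 
          Finset.sum_add_distrib, Finset.sum_neg_distrib]
        rw [← hsv, hsq]
        abel
  refine ⟨⟨cdeg_finite h.fin, ?_, ?_, ?_⟩, _, op, ?_⟩
  · refine homog_blk h.hD ?_ (hT.hT c) h.hD.neg
    refine Homog.neg (Homog.smul _ ?_)
    exact Homog.one
  · rw [op.sq]
    refine Submodule.sum_mem _ fun i hi v s => ?_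
    have : x i ∈ Jx x c := by
      classical
      refine mem_Jx.2 ⟨fun j => if j = i then 1 else 0, ?_⟩
      simp [Finset.mem_range.1 hi]
    exact (Jx x c).mul_mem_right _ this
  · intro z hz
    obtain ⟨v, w, rfl⟩ := exists_pair z
    rw [gD_pair, pair_mem_JF] at hz
    have h1 : D v ∈ JF I (Jx x (c + 1)) := by
      have := Submodule.add_mem _ (JF_mono (Jx_succ_le x c) hz.1)
        (show x c • w ∈ JF I (Jx x (c + 1)) from
          fun i => (Jx x (c + 1)).mul_mem_right _ (Jx_last x c))
      simpa using this
    obtain ⟨u, hu⟩ := h.ex v h1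
    obtain ⟨p, hp⟩ := mem_JF_succ hu
    refine ⟨pair u (-p), ?_⟩
    rw [gD_pair, pair_sub, pair_mem_JF]
    have h2 : v - (D u - x c • -p) ∈ JF I (Jx x c) := by
      convert hp using 1
      simp [sub_sub]
    refine ⟨h2, ?_⟩
    -- the difference is again a cycle
    have h3 := map_JF D h2
    have h4 := Submodule.sub_mem _ h3 hz.1
    have h5 : D (v - (D u - x c • -p)) - (D v - x c • w)
        = x c • (w - (T c u - D (-p))) - ∑ i ∈ Finset.range c, x i • T i u := by
      simp only [map_sub, map_smul, hsq, smul_sub]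
      abel
    have h6 : ∑ i ∈ Finset.range c, x i • T i u ∈ JF I (Jx x c) := by
      refine Submodule.sum_mem _ fun i hi s => ?_
      have : x i ∈ Jx x c := by
        classical
        refine mem_Jx.2 ⟨fun j => if j = i then 1 else 0, ?_⟩
        simp [Finset.mem_range.1 hi]
      exact (Jx x c).mul_mem_right _ this
    rw [h5] at h4
    have h7 := Submodule.add_mem _ h4 h6
    rw [sub_add_cancel] at h7
    exact fun i => hx c (by omega) _ (h7 i)
  · intro i w
    rw [blk_pair]; simp

end Ops
end SymGrowth

namespace SymGrowth

section Wrap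
open MvPolynomial
variable {σ k : Type*} [Field k]

lemma exists_alg {E : Type*} [Ring E] [Algebra k E] (t : σ → E) (ht : ∀ i j, t i * t j = t j * t i) :
    ∃ ψ : MvPolynomial σ k →ₐ[k] E, ∀ i, ψ (X i) = t i := by
  have hc : ∀ a ∈ Set.range t, ∀ b ∈ Set.range t, a * b = b * a := by
    rintro _ ⟨i, rfl⟩ _ ⟨j, rfl⟩
    exact ht i j
  let _ : CommRing (Algebra.adjoin k (Set.range t)) :=
    { (inferInstance : Ring (Algebra.adjoin k (Set.range t))) with
      mul_comm := (Algebra.isMulCommutative_adjoin k hc).is_comm.comm }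
  let f : σ → Algebra.adjoin k (Set.range t) := fun i => ⟨t i, Algebra.subset_adjoin ⟨i, rfl⟩⟩
  refine ⟨(Algebra.adjoin k (Set.range t)).val.comp (aeval (R := k) f), fun i => ?_⟩
  have : (aeval (R := k) f) (X i) = f i := aeval_X f i
  exact congrArg Subtype.val this

variable [Fintype σ] {H : Type*} [AddCommGroup H] [Module k H]

lemma wrap (th : σ → Module.End k H) (hth : ∀ i j, th i * th j = th j * th i)
    (Hn : ℤ → Submodule k H) (N : ℤ) (hfin : ∀ n, (Hn n).FG)
    (hproj : ∀ n, ∃ π : H →ₗ[k] H, (∀ x ∈ Hn n, π x = x) ∧ ∀ m, m ≠ n → ∀ x ∈ Hn m, π x = 0)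
    (hX : ∀ i n, ∀ x ∈ Hn n, th i x ∈ Hn (n + 2))
    (gen : ∀ n ≥ N, ∀ x ∈ Hn (n + 2), ∃ y : σ → H, (∀ i, y i ∈ Hn n) ∧ x = ∑ i, th i (y i)) :
    (∀ K : ℤ → Submodule k H, (∀ n, K n ≤ Hn n) → (∀ i n, ∀ x ∈ K n, th i x ∈ K (n + 2)) →
      ∃ N', ∀ n ≥ N', ∀ x ∈ K (n + 2), ∃ y : σ → H, (∀ i, y i ∈ K n) ∧ x = ∑ i, th i (y i)) ∧
    ∃ ψ : MvPolynomial σ k →ₐ[k] Module.End k H, (∀ i, ψ (X i) = th i) ∧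
      ∃ e : ℕ, 0 < e ∧ ∃ p : MvPolynomial σ k, p.IsHomogeneous e ∧ 
        ∃ N' : ℤ, ∀ n ≥ N', ∀ x ∈ Hn n, ψ p x = 0 → x = 0 := by
  obtain ⟨ψ, hψ⟩ := exists_alg (k := k) th hth
  let _ : Module (MvPolynomial σ k) H := Module.compHom H ψ.toRingHom
  have hs : ∀ (p : MvPolynomial σ k) (x : H), p • x = ψ p x := fun _ _ => rfl
  have : IsScalarTower k (MvPolynomial σ k) H := ⟨fun a p x => by
    rw [hs, hs, map_smul]; rfl⟩
  have hs' : ∀ i (x : H), (X i : MvPolynomial σ k) • x = th i x := fun i x => by rw [hs, hψ]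
  have G : GrData (σ := σ) Hn N := 
    ⟨hfin, hproj, fun i n x hx => by rw [hs']; exact hX i n x hx, fun n hn x hx => by
      obtain ⟨y, hy, h⟩ := gen n hn x hx
      exact ⟨y, hy, by simpa only [hs'] using h⟩⟩
  refine ⟨fun K hK1 hK2 => ?_, ψ, hψ, ?_⟩
  · obtain ⟨N', hN'⟩ := G.sub_gen K hK1 (fun i n x hx => by rw [hs']; exact hK2 i n x hx)
    exact ⟨N', fun n hn x hx => by simpa only [hs'] using hN' n hn x hx⟩
  · obtain ⟨e, p, he, hp, N', hN'⟩ := G.exists_regular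
    exact ⟨e, he, p, hp, N', hN'⟩

end Wrap

section KLevel
variable {k : Type*} [Field k] {I : Type*} {deg : I → ℤ} {d : Module.End k (I →₀ k)}
  {t : ℕ → Module.End k (I →₀ k)} {c : ℕ}

lemma cls_sum {V ι : Type*} [AddCommGroup V] [Module k V] {d : Module.End k V} (s : Finset ι)
    (f : ι → V) (hf : ∀ i, d (f i) = 0) :
    ∑ i ∈ s, cls (f i) (hf i) = cls (∑ i ∈ s, f i) (by simp [hf]) := by
  classical
  induction s using Finset.induction_on with
  | empty => simp; rfl
  | insert i s hi ih =>
    rw [Finset.sum_insert hi, ih]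
    simp only [Finset.sum_insert hi]
    rfl

/-- Eventual generation of homology under operators. -/
def Gen (d : Module.End k (I →₀ k)) (t : ℕ → Module.End k (I →₀ k)) (c : ℕ)
    (Z : ℤ → Submodule k (I →₀ k)) : Prop :=
  ∃ N : ℤ, ∀ n ≥ N, ∀ z ∈ Z (n + 2), d z = 0 →
    ∃ y : ℕ → (I →₀ k), (∀ i, y i ∈ Z n ∧ d (y i) = 0) ∧
      ∃ u, d u = z - ∑ i ∈ Finset.range c, t i (y i)

lemma klevel (hfin : ∀ n, {i | deg i = n}.Finite) (hd : Homog deg 1 d)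
    (ht : ∀ i, Homog deg 2 (t i)) (hdt : ∀ i < c, ∀ v, d (t i v) = t i (d v))
    (hcomm : ∀ i < c, ∀ j < c, ∀ z, d z = 0 → ∃ u, d u = t i (t j z) - t j (t i z))
    (hgen : Gen d t c (gr k deg)) :
    (∀ K : ℤ → Submodule k (I →₀ k), (∀ n, K n ≤ gr k deg n) →
      (∀ i < c, ∀ n, ∀ z ∈ K n, t i z ∈ K (n + 2)) → Gen d t c K) ∧
    ∃ ψ : MvPolynomial (Fin c) k →ₐ[k] Module.End k (Hom d),
      (∀ i z, ∀ hz : d z = 0, ∃ h, ψ (MvPolynomial.X i) (cls z hz) = cls (t i z) h) ∧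
      ∃ e : ℕ, 0 < e ∧ ∃ p : MvPolynomial (Fin c) k, p.IsHomogeneous e ∧ 
        ∃ N' : ℤ, ∀ n ≥ N', ∀ x ∈ Hn deg d n, ψ p x = 0 → x = 0 := by
  classical
  let th : Fin c → Module.End k (Hom d) := fun i => mapH (t i)
    (fun z hz => by rw [hdt i i.2, hz, map_zero]) (fun u => ⟨t i u, hdt i i.2 u⟩)
  have hth : ∀ i z, ∀ hz : d z = 0, ∀ h, th i (cls z hz) = cls (t i z) h := fun _ _ _ _ => rfl
  have hdz : ∀ (i : Fin c) z, d z = 0 → d (t i z) = 0 := fun i z hz => by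
    rw [hdt i i.2, hz, map_zero]
  have W := wrap th ?_ (Hn deg d) hgen.choose (fun n => Hn_fg d (hfin n)) ?_ ?_ ?_
  · obtain ⟨h1, ψ, hψ, h2⟩ := W
    refine ⟨fun K hK1 hK2 => ?_, ψ, fun i z hz => ⟨hdz i z hz, by rw [hψ]; rfl⟩, h2⟩
    obtain ⟨N', hN'⟩ := h1
      (fun n => ((K n).comap (LinearMap.ker d).subtype).map (Submodule.mkQ _))
      (fun n => Submodule.map_mono (Submodule.comap_mono (hK1 n)))
      (by
        rintro i n _ ⟨⟨z, hz⟩, hzK, rfl⟩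
        exact ⟨⟨t i z, hdz i z hz⟩, hK2 i i.2 n z hzK, rfl⟩)
    refine ⟨N', fun n hn z hz hdz' => ?_⟩
    obtain ⟨y, hy, h⟩ := hN' n hn (cls z hdz') ⟨⟨z, hdz'⟩, hz, rfl⟩
    have hy' : ∀ i, ∃ w, ∃ hw : d w = 0, w ∈ K n ∧ y i = cls w hw := by
      intro i
      obtain ⟨⟨w, hw⟩, hwK, hwy⟩ := hy i
      exact ⟨w, hw, hwK, hwy.symm⟩
    choose w hw hwK hwy using hy'
    refine ⟨fun i => if h : i < c then w ⟨i, h⟩ else 0, fun i => ?_, ?_⟩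
    · by_cases h : i < c
      · simp only [h, dif_pos]; exact ⟨hwK _, hw _⟩
      · simp only [h, dif_neg, not_false_eq_true]; exact ⟨Submodule.zero_mem _, map_zero _⟩
    · rw [Finset.sum_range]
      simp only [Fin.is_lt, dif_pos, Fin.eta]
      have h3 : ∑ i, th i (y i) = ∑ i : Fin c, cls (t i (w i)) (hdz i _ (hw i)) :=
        Finset.sum_congr rfl fun i _ => by rw [hwy i]; rfl
      rw [h3, cls_sum, cls_eq] at h
      exact h
  · intro i j
    apply LinearMap.ext
    intro x
    obtain ⟨z, hz, rfl⟩ := exists_cls x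
    simp only [Module.End.mul_apply]
    rw [hth j z hz (hdz j z hz), hth i _ _ (hdz i _ (hdz j z hz)), hth i z hz (hdz i z hz),
      hth j _ _ (hdz j _ (hdz i z hz)), cls_eq]
    exact hcomm i i.2 j j.2 z hz
  · intro n
    refine ⟨mapH (pr k deg n) (fun z hz => ?_) (fun u => ?_), ?_, ?_⟩
    · rw [hd.pr_comm, hz, map_zero]
    · refine ⟨pr k deg (n - 1) u, ?_⟩
      rw [hd.pr_comm, sub_add_cancel]
    · intro x hx
      obtain ⟨z, hz, hzn, rfl⟩ := mem_Hn.1 hx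
      rw [mapH_cls]
      congr 1
      exact pr_of_mem hzn
    · intro m hm x hx
      obtain ⟨z, hz, hzn, rfl⟩ := mem_Hn.1 hx
      rw [mapH_cls, cls_eq_zero]
      exact ⟨0, by rw [map_zero, pr_of_mem_ne hm hzn]⟩
  · intro i n x hx
    obtain ⟨z, hz, hzn, rfl⟩ := mem_Hn.1 hx
    exact cls_mem_Hn _ (ht i n z hzn)
  · intro n hn x hx
    obtain ⟨z, hz, hzn, rfl⟩ := mem_Hn.1 hx
    obtain ⟨y, hy, u, hu⟩ := hgen.choose_spec n hn z hzn hz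
    refine ⟨fun i => cls (y i) (hy i).2, fun i => cls_mem_Hn _ (hy i).1, ?_⟩
    have h3 : ∑ i : Fin c, th i (cls (y i) (hy i).2) =
        ∑ i : Fin c, cls (t i (y i)) (hdz i _ (hy i).2) := rfl
    rw [h3, cls_sum, cls_eq]
    refine ⟨u, ?_⟩
    rw [hu, Finset.sum_range]

end KLevel
end SymGrowth

namespace SymGrowth

section BLevel
variable {B : Type*} [CommRing B]

lemma mem_JF_sup {I : Type*} {J : Ideal B} {y : B} {v : I →₀ B}
    (hv : v ∈ JF I (J ⊔ Ideal.span {y})) : ∃ p, v - y • p ∈ JF I J := by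
  classical
  have key : ∀ b : B, ∃ p, (b ∈ J ⊔ Ideal.span {y} → b - y * p ∈ J) ∧ (b = 0 → p = 0) := by
    intro b
    by_cases hb : b = 0
    · exact ⟨0, fun _ => by simp [hb], fun _ => rfl⟩
    · by_cases hb' : b ∈ J ⊔ Ideal.span {y}
      · obtain ⟨a, ha, z, hz, rfl⟩ := Submodule.mem_sup.1 hb'
        obtain ⟨p, rfl⟩ := Ideal.mem_span_singleton.1 hz
        exact ⟨p, fun _ => by simpa using ha, fun h => absurd h hb⟩
      · exact ⟨0, fun h => absurd h hb', fun _ => rfl⟩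
  choose p hp hp0 using key
  refine ⟨v.mapRange p (hp0 0 rfl), fun i => ?_⟩
  simpa using hp _ (hv i)

lemma RegIdeal.exact {I : Type*} {J : Ideal B} (hJ : RegIdeal J) {D : Module.End B (I →₀ B)}
    (h0 : ∀ v, D (D v) = 0) (hex : ∀ v, D v = 0 → ∃ u, v = D u) :
    ∀ v, D v ∈ JF I J → ∃ u, v - D u ∈ JF I J := by
  induction hJ with
  | bot =>
    intro v hv
    have : D v = 0 := by
      ext i; exact hv i
    obtain ⟨u, hu⟩ := hex v this
    exact ⟨u, by rw [hu, sub_self]; exact Submodule.zero_mem _⟩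
  | step J y _ hy ih =>
    intro v hv
    obtain ⟨p, hp⟩ := mem_JF_sup hv
    have h1 := map_JF D hp
    rw [map_sub, h0, zero_sub, map_smul] at h1
    have h2 : D p ∈ JF I J := by
      intro i
      refine hy _ ?_
      have := J.neg_mem (h1 i)
      simpa using this
    obtain ⟨u, hu⟩ := ih p h2
    have h3 : D (v - y • u) ∈ JF I J := by
      have := Submodule.add_mem _ hp (Submodule.smul_mem _ y hu)
      convert this using 1
      rw [map_sub, map_smul, smul_sub]; abel
    obtain ⟨w, hw⟩ := ih _ h3
    refine ⟨w, ?_⟩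
    have h4 : y • u ∈ JF I (J ⊔ Ideal.span {y}) := fun i =>
      Ideal.mul_mem_right _ _ (Ideal.mem_sup_right (Ideal.mem_span_singleton_self y))
    have := Submodule.add_mem _ (JF_mono le_sup_left hw) h4
    convert this using 1
    abel

lemma Jx_mono_ker {x : ℕ → B} {c : ℕ} {J : Ideal B} (hJ : Jx x (c + 1) ≤ J) : Jx x c ≤ J :=
  (Jx_succ_le x c).trans hJ

variable {k : Type*} [Field k] [Algebra B k] (hk : Function.Surjective (algebraMap B k))
  {x : ℕ → B} {c : ℕ}

include hk

lemma base_exact {I : Type*} {deg : I → ℤ} {D : Module.End B (I →₀ B)}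
    (hm : RegIdeal (RingHom.ker (algebraMap B k))) (h : Cx x 0 deg D) :
    ∀ z, red k D z = 0 → ∃ u, red k D u = z := by
  intro z hz
  obtain ⟨v, rfl⟩ := rho_surj hk z
  rw [red_rho, rho_eq_zero] at hz
  have h0 : ∀ v ∈ JF I (Jx x 0), v = 0 := by
    intro v hv; ext i; exact hv i
  obtain ⟨u, hu⟩ := hm.exact (fun v => h0 _ (h.sq v)) (fun v hv => by
    obtain ⟨u, hu⟩ := h.ex v (by rw [hv]; exact Submodule.zero_mem _)
    exact ⟨u, sub_eq_zero.1 (h0 _ hu)⟩) v hz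
  refine ⟨rho k u, ?_⟩
  rw [red_rho]
  rw [← rho_eq_zero, map_sub, sub_eq_zero] at hu
  exact hu.symm

section
variable {I : Type*} {deg : I → ℤ} {D : Module.End B (I →₀ B)} {T : ℕ → Module.End B (I →₀ B)}
  (hJ : Jx x c ≤ RingHom.ker (algebraMap B k))
include hJ

lemma Cx.red_sq (h : Cx x c deg D) (v : I →₀ k) : red k D (red k D v) = 0 := by
  have := LinearMap.congr_fun (red_eq_zero hk hJ h.sq) v
  rwa [red_mul hk] at this

lemma red_comm {L : Module.End B (I →₀ B)} (hL : ∀ v, D (L v) - L (D v) ∈ JF I (Jx x c))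
    (v : I →₀ k) : red k D (red k L v) = red k L (red k D v) := by
  obtain ⟨v, rfl⟩ := rho_surj hk v
  simp only [red_rho]
  rw [← sub_eq_zero, ← map_sub, rho_eq_zero]
  exact JF_mono hJ (hL v)

lemma Cx.klevel (hx : RegUpTo x c) (h : Cx x c deg D) (hT : Op x c deg D T)
    (hgen : Gen (red k D) (fun i => red k (T i)) c (gr k deg)) :
    (∀ K : ℤ → Submodule k (I →₀ k), (∀ n, K n ≤ gr k deg n) →
      (∀ i < c, ∀ n, ∀ z ∈ K n, red k (T i) z ∈ K (n + 2)) →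
        Gen (red k D) (fun i => red k (T i)) c K) ∧
    ∃ ψ : MvPolynomial (Fin c) k →ₐ[k] Module.End k (Hom (red k D)),
      (∀ i z, ∀ hz : red k D z = 0, ∃ h,
        ψ (MvPolynomial.X i) (cls z hz) = cls (red k (T i) z) h) ∧
      ∃ e : ℕ, 0 < e ∧ ∃ p : MvPolynomial (Fin c) k, p.IsHomogeneous e ∧ 
        ∃ N' : ℤ, ∀ n ≥ N', ∀ x ∈ Hn deg (red k D) n, ψ p x = 0 → x = 0 := by
  refine SymGrowth.klevel h.fin (red_homog h.hD) (fun i => red_homog (hT.hT i)) ?_ ?_ hgen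
  · intro i hi v
    exact red_comm hk hJ (fun v => hT.comm hx i hi v) v
  · intro i hi j hj z hz
    obtain ⟨g, hg⟩ := hT.comm2 hx h.hD i hi j hj
    obtain ⟨v, rfl⟩ := rho_surj hk z
    refine ⟨red k g (rho k v), ?_⟩
    have h1 := red_eq_zero hk hJ hg
    have h2 := LinearMap.congr_fun h1 (rho k v)
    rw [red_sub hk, red_sub hk, red_add hk] at h2
    simp only [red_mul hk] at h2
    have h3 : red k (T i) (red k (T j) (rho k v)) - red k (T j) (red k (T i) (rho k v)) -
      (red k D (red k g (rho k v)) + red k g (red k D (rho k v))) = 0 := h2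
    rw [hz, map_zero, add_zero, sub_eq_zero] at h3
    exact h3.symm

end

lemma red_gD {I : Type*} {D S : Module.End B (I →₀ B)} {y : B}
    (hy : y ∈ RingHom.ker (algebraMap B k)) :
    red k (gD y D S) = cone (red k D) (red k S) := by
  rw [RingHom.mem_ker] at hy
  rw [gD, red_blk hk, cone, red_neg hk, red_neg hk, red_smul hk, hy, zero_smul]
  apply end_pair_ext
  intro v w
  rw [blk_pair, blk_pair]
  simp

lemma noeth (hm : RegIdeal (RingHom.ker (algebraMap B k))) :
    ∀ (c : ℕ), RegUpTo x c → Jx x c ≤ RingHom.ker (algebraMap B k) →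
    ∀ (I : Type v) (deg : I → ℤ) (D : Module.End B (I →₀ B)) (T : ℕ → Module.End B (I →₀ B)),
      Cx x c deg D → Op x c deg D T →
      Gen (red k D) (fun i => red k (T i)) c (gr k deg) := by
  intro c
  induction c with
  | zero =>
    intro _ _ I deg D T h hT
    refine ⟨0, fun n _ z hz hdz => ⟨fun _ => 0, fun i => ⟨Submodule.zero_mem _, map_zero _⟩, ?_⟩⟩
    simpa using base_exact hk hm h z hdz
  | succ c ih =>
    intro hx hJ I deg D T h hT
    classical
    obtain ⟨hG, τ, hτ, hτT⟩ := exists_G hx h hT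
    have hJ' := Jx_mono_ker hJ
    have hyk : x c ∈ RingHom.ker (algebraMap B k) := hJ (Jx_last x c)
    have g1 := ih hx.pred hJ' (I ⊕ I) _ _ τ hG hτ
    have hτk : ∀ i w, red k (τ i) (pair 0 w) = pair 0 (red k (T i) w) := by
      intro i w
      obtain ⟨w, rfl⟩ := rho_surj hk w
      have := red_rho (k := k) (τ i) (pair 0 w)
      rw [hτT, rho_pair, rho_pair, map_zero] at this
      rw [this, red_rho]
    obtain ⟨N, hN⟩ := (hG.klevel hk hJ' hx.pred hτ g1).1
      (fun n => (gr k deg (n + 1)).map (inrL k I)) (by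
        rintro n _ ⟨z, hz, rfl⟩
        rw [inrL_apply, pair_mem_gr]
        refine ⟨Submodule.zero_mem _, ?_⟩
        rw [show n + 2 - 1 = n + 1 by ring]; exact hz) (by
        rintro i hi n _ ⟨z, hz, rfl⟩
        refine ⟨red k (T i) z, ?_, ?_⟩
        · have := red_homog (k := k) (hT.hT i) _ _ hz
          rw [show n + 2 + 1 = n + 1 + 2 by ring]; exact this
        · rw [inrL_apply, inrL_apply, hτk])
    rw [red_gD hk hyk] at hN
    refine ⟨N + 1, fun n hn z hz hdz => ?_⟩
    have hz' : z ∈ gr k deg (n - 1 + 2 + 1) := by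
      rw [show n - 1 + 2 + 1 = n + 2 by ring]; exact hz
    obtain ⟨y, hy, u, hu⟩ := hN (n - 1) (by omega) (pair 0 z) ⟨z, hz', rfl⟩ (by
      rw [cone_pair_eq_zero]; simpa using hdz)
    have hy' : ∀ i, ∃ w ∈ gr k deg n, red k D w = 0 ∧ y i = pair 0 w := by
      intro i
      obtain ⟨⟨w, hw, hwy⟩, hc⟩ := hy i
      rw [inrL_apply] at hwy
      rw [← hwy, cone_pair_eq_zero, map_zero, map_zero] at hc
      rw [sub_add_cancel] at hw
      exact ⟨w, hw, hc.2, hwy.symm⟩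
    choose w hw hdw hyw using hy'
    have hsum : ∑ i ∈ Finset.range c, red k (τ i) (y i)
        = pair 0 (∑ i ∈ Finset.range c, red k (T i) (w i)) := by
      rw [← inrL_apply, map_sum]
      refine Finset.sum_congr rfl fun i _ => ?_
      rw [hyw, hτk, inrL_apply]
    rw [hsum, pair_sub, sub_zero] at hu
    have hhom : Homog (cdeg deg 2) 1 (cone (red k D) (red k (T c))) := by
      rw [← red_gD hk hyk]; exact red_homog hG.hD
    have hmem : pair 0 (z - ∑ i ∈ Finset.range c, red k (T i) (w i)) ∈
        gr k (cdeg deg 2) (n + 1) := by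
      rw [pair_mem_gr]
      refine ⟨Submodule.zero_mem _, ?_⟩
      rw [show n + 1 + 2 - 1 = n + 2 by ring]
      exact Submodule.sub_mem _ hz (Submodule.sum_mem _ fun i _ =>
        red_homog (k := k) (hT.hT i) _ _ (hw i))
    obtain ⟨u, hun, hu⟩ := hhom.lift (n := n) rfl hmem hu
    obtain ⟨a, b, rfl⟩ := exists_pair u
    rw [cone_pair, pair_inj] at hu
    refine ⟨fun i => if i = c then a else w i, fun i => ?_, -b, ?_⟩
    · by_cases hi : i = c
      · simp only [hi, if_true]
        exact ⟨(pair_mem_gr.1 hun).1, hu.1⟩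
      · simp only [hi, if_false]
        exact ⟨hw i, hdw i⟩
    · rw [Finset.sum_range_succ]
      simp only [if_true]
      have : ∑ i ∈ Finset.range c, red k (T i) (if i = c then a else w i) =
          ∑ i ∈ Finset.range c, red k (T i) (w i) :=
        Finset.sum_congr rfl fun i hi => by rw [if_neg (Finset.mem_range.1 hi).ne]
      rw [this, ← sub_sub, ← hu.2, map_neg]
      abel

lemma vanish (hm : RegIdeal (RingHom.ker (algebraMap B k))) :
    ∀ (c : ℕ), RegUpTo x c → Jx x c ≤ RingHom.ker (algebraMap B k) →
    ∀ (I : Type v) (deg : I → ℤ) (D : Module.End B (I →₀ B)), Cx x c deg D → 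
      (∃ N : ℤ, ∀ n ≥ N, ∀ z ∈ gr k deg n, red k D z = 0 → ∃ u, red k D u = z) →
      ∀ n, ∀ z ∈ gr k deg n, red k D z = 0 → ∃ u, red k D u = z := by
  intro c
  induction c with
  | zero =>
    intro _ _ I deg D h _ n z _ hdz
    exact base_exact hk hm h z hdz
  | succ c ih =>
    rintro hx hJ I deg D h ⟨N, hN⟩
    obtain ⟨T, hT⟩ := h.exists_op
    obtain ⟨hG, τ, hτ, hτT⟩ := exists_G hx h hT
    have hJ' := Jx_mono_ker hJ
    have hyk : x c ∈ RingHom.ker (algebraMap B k) := hJ (Jx_last x c)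
    have hdt := red_comm (D := D) (L := T c) hk hJ (fun v => hT.comm hx c (by omega) v)
    have g1 := ih hx.pred hJ' (I ⊕ I) _ _ hG
    rw [red_gD hk hyk] at g1
    have g2 := g1 ⟨N, fun n hn z hz hdz => ?_⟩
    · have inj : ∀ n, ∀ z ∈ gr k deg n, red k D z = 0 →
          (∃ w, red k D w = red k (T c) z) → ∃ u, red k D u = z := by
        rintro n z hz hdz ⟨w, hw⟩
        obtain ⟨w, hwn, hw⟩ := (red_homog (k := k) h.hD).lift (n := n + 2 - 1) (m := n + 2)
          (by ring) (red_homog (k := k) (hT.hT c) _ _ hz) hw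
        obtain ⟨u, hu⟩ := g2 n (pair z w) (pair_mem_gr.2 ⟨hz, hwn⟩)
          (cone_pair_eq_zero.2 ⟨hdz, hw⟩)
        obtain ⟨a, b, rfl⟩ := exists_pair u
        rw [cone_pair, pair_inj] at hu
        exact ⟨a, hu.1⟩
      have key : ∀ j : ℕ, ∀ n : ℤ, N ≤ n + 2 * j → ∀ z ∈ gr k deg n, red k D z = 0 →
          ∃ u, red k D u = z := by
        intro j
        induction j with
        | zero => intro n hn z hz hdz; exact hN n (by simpa using hn) z hz hdz
        | succ j ihj =>
          intro n hn z hz hdz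
          refine inj n z hz hdz (ihj (n + 2) (by push_cast at hn; omega) _
            (red_homog (k := k) (hT.hT c) _ _ hz) ?_)
          rw [hdt, hdz, map_zero]
      intro n
      exact key (N - n).toNat n (by omega)
    · obtain ⟨v, w, rfl⟩ := exists_pair z
      obtain ⟨hv, hw⟩ := cone_pair_eq_zero.1 hdz
      obtain ⟨hvn, hwn⟩ := pair_mem_gr.1 hz
      obtain ⟨u, hu⟩ := hN n hn v hvn hv
      obtain ⟨u, hun, hu⟩ := (red_homog (k := k) h.hD).lift (n := n - 1) (m := n)
          (by ring) hvn hu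
      have hc : red k D (w - red k (T c) u) = 0 := by
        rw [map_sub, hdt, hu, hw, sub_self]
      have hmem : red k (T c) u ∈ gr k deg (n + 2 - 1) := by
        have := red_homog (k := k) (hT.hT c) _ _ hun
        rwa [show n - 1 + 2 = n + 2 - 1 by ring] at this
      obtain ⟨b, hb⟩ := hN (n + 2 - 1) (by omega) _ (Submodule.sub_mem _ hwn hmem) hc
      refine ⟨pair u (-b), ?_⟩
      rw [cone_pair, pair_inj, map_neg, hb]
      exact ⟨hu, by abel⟩

end BLevel

end SymGrowth

namespace SymGrowth

section Lifts
variable {B : Type*} [CommRing B] {I : Type*}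

/-- An operator on homology that lifts to a homogeneous chain map modulo the ideal. -/
def Lifts (k : Type*) [Field k] [Algebra B k] (x : ℕ → B) (c : ℕ) (deg : I → ℤ)
    (D : Module.End B (I →₀ B)) (e : ℤ) (φ : Module.End k (Hom (red k D))) : Prop :=
  ∃ L : Module.End B (I →₀ B), Homog deg e L ∧ (∀ v, D (L v) - L (D v) ∈ JF I (Jx x c)) ∧
    ∀ z, ∀ hz : red k D z = 0, ∃ h, φ (cls z hz) = cls (red k L z) h

variable {k : Type*} [Field k] [Algebra B k] (hk : Function.Surjective (algebraMap B k))
  {x : ℕ → B} {c : ℕ} {deg : I → ℤ} {D : Module.End B (I →₀ B)}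
include hk

lemma Lifts.add {e : ℤ} {φ χ : Module.End k (Hom (red k D))} (h1 : Lifts k x c deg D e φ)
    (h2 : Lifts k x c deg D e χ) : Lifts k x c deg D e (φ + χ) := by
  obtain ⟨L, hL, hLc, hLz⟩ := h1
  obtain ⟨M, hM, hMc, hMz⟩ := h2
  refine ⟨L + M, hL.add hM, fun v => ?_, fun z hz => ?_⟩
  · convert Submodule.add_mem _ (hLc v) (hMc v) using 1
    simp only [LinearMap.add_apply, map_add]; abel
  · obtain ⟨a, ha⟩ := hLz z hz
    obtain ⟨b, hb⟩ := hMz z hz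
    refine ⟨by rw [red_add hk, LinearMap.add_apply, map_add, a, b, add_zero], ?_⟩
    rw [LinearMap.add_apply, ha, hb]
    have : red k (L + M) z = red k L z + red k M z := by
      rw [red_add hk]; rfl
    simp only [this]
    rfl

lemma Lifts.mul {e f : ℤ} {φ χ : Module.End k (Hom (red k D))} (h1 : Lifts k x c deg D e φ)
    (h2 : Lifts k x c deg D f χ) : Lifts k x c deg D (e + f) (φ * χ) := by
  obtain ⟨L, hL, hLc, hLz⟩ := h1
  obtain ⟨M, hM, hMc, hMz⟩ := h2
  refine ⟨L * M, hL.mul hM, fun v => ?_, fun z hz => ?_⟩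
  · convert Submodule.add_mem _ (hLc (M v)) (map_JF L (hMc v)) using 1
    simp only [Module.End.mul_apply, map_sub]; abel
  · obtain ⟨b, hb⟩ := hMz z hz
    obtain ⟨a, ha⟩ := hLz _ b
    have : red k (L * M) z = red k L (red k M z) := by
      rw [red_mul hk]; rfl
    refine ⟨by rw [this]; exact a, ?_⟩
    rw [Module.End.mul_apply, hb, ha]
    simp only [this]

lemma Lifts.zero {e : ℤ} : Lifts k x c deg D e 0 := by
  refine ⟨0, Homog.zero, fun v => by simp, fun z hz => ?_⟩
  have : red k (0 : Module.End B (I →₀ B)) z = 0 := by rw [red_zero hk]; rfl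
  refine ⟨by rw [this, map_zero], ?_⟩
  simp only [this]
  rfl

lemma Lifts.scalar (a : k) : Lifts k x c deg D 0 (algebraMap k _ a) := by
  obtain ⟨b, rfl⟩ := hk a
  refine ⟨b • 1, Homog.one.smul b, fun v => by simp, fun z hz => ?_⟩
  have : red k (b • 1 : Module.End B (I →₀ B)) z = algebraMap B k b • z := by
    rw [red_smul hk, red_one hk]; rfl
  refine ⟨by rw [this, map_smul, hz, smul_zero], ?_⟩
  simp only [this]
  rfl

open MvPolynomial in
lemma Lifts.poly {σ : Type*} {ψ : MvPolynomial σ k →ₐ[k] Module.End k (Hom (red k D))}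
    (hX : ∀ i, Lifts k x c deg D 2 (ψ (X i))) {e : ℕ} {p : MvPolynomial σ k}
    (hp : p.IsHomogeneous e) : Lifts k x c deg D (2 * e) (ψ p) := by
  classical
  have hpow : ∀ i (n : ℕ), Lifts k x c deg D (2 * n) (ψ (X i ^ n)) := by
    intro i n
    induction n with
    | zero =>
      have := Lifts.scalar (D := D) (deg := deg) (x := x) (c := c) hk (1 : k)
      simpa using this
    | succ n ih =>
      have := ih.mul hk (hX i)
      rw [pow_succ, map_mul]
      push_cast
      rwa [mul_add, mul_one]
  have hmon : ∀ s : σ →₀ ℕ, ∀ a : k, Lifts k x c deg D (2 * (s.degree : ℕ)) (ψ (monomial s a)) := by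
    intro s
    induction s using Finsupp.induction_linear with
    | zero =>
      intro a
      have := Lifts.scalar (D := D) (deg := deg) (x := x) (c := c) hk a
      have h2 : ψ (monomial 0 a) = algebraMap k _ a := by
        rw [← ψ.commutes]; rfl
      rw [h2]; simpa using this
    | add f g hf hg =>
      intro a
      have h1 : monomial (f + g) a = monomial f a * monomial g (1 : k) := by
        rw [monomial_mul, mul_one]
      rw [h1, map_mul, map_add]
      push_cast
      rw [mul_add]
      exact (hf a).mul hk (hg 1)
    | single i n =>
      intro a
      have h1 : monomial (Finsupp.single i n) a = C a * X i ^ n := by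
        rw [X_pow_eq_monomial, C_mul_monomial, mul_one]
      have h2 : ψ (C a) = algebraMap k _ a := by
        rw [← ψ.commutes]; rfl
      have := (Lifts.scalar (D := D) (deg := deg) (x := x) (c := c) hk a).mul hk (hpow i n)
      rw [h1, map_mul, h2]
      simpa using this
  rw [p.as_sum, map_sum]
  have : ∀ s : Finset (σ →₀ ℕ), (∀ m ∈ s, m.degree = e) →
      Lifts k x c deg D (2 * e) (∑ m ∈ s, ψ (monomial m (coeff m p))) := by
    intro s
    induction s using Finset.induction_on with
    | empty => intro _; rw [Finset.sum_empty]; exact Lifts.zero hk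
    | insert m s hm ih =>
      intro hs
      rw [Finset.sum_insert hm]
      refine Lifts.add hk ?_ (ih fun m h => hs m (Finset.mem_insert_of_mem h))
      rw [← hs m (Finset.mem_insert_self _ _)]
      exact hmon m _
  refine this _ fun m hm => ?_
  have := hp (mem_support_iff.1 hm)
  rwa [Finsupp.degree_eq_weight_one]

end Lifts

section E
variable {B : Type*} [CommRing B] {k : Type*} [Field k] [Algebra B k]
  (hk : Function.Surjective (algebraMap B k))
  (hm : RegIdeal (RingHom.ker (algebraMap B k)))
  {x : ℕ → B} {c : ℕ} (hx : RegUpTo x c) (hJ : Jx x c ≤ RingHom.ker (algebraMap B k))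
include hk hm hx hJ

theorem thmE {I : Type v} {deg : I → ℤ} {D : Module.End B (I →₀ B)} (h : Cx x c deg D) :
    ∃ e : ℕ, 0 < e ∧ ∃ g : Module.End B (I →₀ B), Homog deg e g ∧
      (∀ v, D (g v) - g (D v) ∈ JF I (Jx x c)) ∧
      ∃ N : ℤ, ∀ n ≥ N, ∀ z ∈ gr k deg n, red k D z = 0 →
        (∃ u, red k D u = red k g z) → ∃ u, red k D u = z := by
  obtain ⟨T, hT⟩ := h.exists_op
  obtain ⟨_, ψ, hψ, e, he, p, hp, N, hN⟩ :=
    h.klevel hk hJ hx hT (noeth hk hm c hx hJ I deg D T h hT)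
  obtain ⟨g, hg, hgc, hgz⟩ := Lifts.poly (x := x) (c := c) (deg := deg) hk
    (fun i : Fin c => ⟨T i, hT.hT i, fun v => hT.comm hx i i.2 v, hψ i⟩) hp
  refine ⟨2 * e, by omega, g, by push_cast; exact hg, hgc, N, fun n hn z hz hdz hu => ?_⟩
  obtain ⟨h1, h2⟩ := hgz z hdz
  have := hN n hn (cls z hdz) (cls_mem_Hn _ hz) (by rw [h2, cls_eq_zero]; exact hu)
  rwa [cls_eq_zero] at this

end E

section ConeCx
variable {B : Type*} [CommRing B] {I : Type*}
  {x : ℕ → B} {c : ℕ} {deg : I → ℤ} {D g : Module.End B (I →₀ B)}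

lemma Cx.cone {e : ℤ} (h : Cx x c deg D) (hg : Homog deg e g)
    (hgc : ∀ v, D (g v) - g (D v) ∈ JF I (Jx x c)) :
    Cx x c (cdeg deg e) (blk D 0 g (-D)) where
  fin := cdeg_finite h.fin
  hD := by
    refine homog_blk h.hD Homog.zero ?_ h.hD.neg
    rwa [add_sub_cancel_left]
  sq := by
    intro v
    obtain ⟨v, w, rfl⟩ := exists_pair v
    rw [Module.End.mul_apply, blk_pair, blk_pair, pair_mem_JF]
    refine ⟨?_, ?_⟩
    · simpa using h.sq v
    · convert Submodule.sub_mem _ (h.sq w) (hgc v) using 1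
      simp [sub_eq_add_neg]; abel
  ex := by
    intro v hv
    obtain ⟨v, w, rfl⟩ := exists_pair v
    rw [blk_pair, pair_mem_JF] at hv
    obtain ⟨hv, hw⟩ := hv
    simp only [LinearMap.zero_apply, add_zero, LinearMap.neg_apply] at hv hw
    obtain ⟨u, hu⟩ := h.ex v hv
    have h2 : D (w - g u) ∈ JF I (Jx x c) := by
      have := Submodule.sub_mem _ (Submodule.sub_mem _ (map_JF g hu) hw) (hgc u)
      convert this using 1
      simp only [map_sub]; abel
    obtain ⟨b, hb⟩ := h.ex _ h2
    refine ⟨pair u (-b), ?_⟩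
    rw [blk_pair, pair_sub, pair_mem_JF]
    refine ⟨by simpa using hu, ?_⟩
    convert hb using 1
    simp; abel

lemma red_cone {k : Type*} [Field k] [Algebra B k] (hk : Function.Surjective (algebraMap B k)) :
    red k (blk D 0 g (-D)) = SymGrowth.cone (red k D) (red k g) := by
  rw [red_blk hk, SymGrowth.cone, red_neg hk, red_zero hk]

end ConeCx

end SymGrowth

namespace SymGrowth

section Num

/-- polynomial growth of degree `s - 1` -/
def PG (f : ℕ → ℕ) : ℕ → Prop
  | 0 => ∃ N, ∀ n ≥ N, f n = 0
  | s + 1 => ∃ a N, ∀ n ≥ N, f n ≤ a * n ^ s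

lemma num1 {b h : ℤ → ℕ} {e e' : ℕ} (he : 0 < e) (he' : 0 < e') {N N' : ℤ}
    (hb : ∀ n ≥ N, h n + b (n - 1) ≤ b (n + e - 1))
    (hm : ∀ n ≥ N', h n ≤ h (n + e')) {s : ℕ} (hp : PG (fun n => b n) (s + 1)) :
    PG (fun n => h n) s := by
  have h1 : ∀ j : ℕ, ∀ n ≥ N', h n ≤ h (n + j * e') := by
    intro j
    induction j with
    | zero => intro n _; simp
    | succ j ih =>
      intro n hn
      refine (ih n hn).trans ?_
      have := hm (n + j * e') (le_trans hn (by
        have : (0 : ℤ) ≤ j * e' := by positivity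
        omega))
      have h3 : n + ((j + 1 : ℕ) : ℤ) * e' = n + j * e' + e' := by push_cast; ring
      rw [h3]; exact this
  have h2 : ∀ j : ℕ, ∀ n ≥ N, b (n - 1) ≤ b (n + j * e - 1) := by
    intro j
    induction j with
    | zero => intro n _; simp
    | succ j ih =>
      intro n hn
      refine (ih n hn).trans ?_
      have := hb (n + j * e) (le_trans hn (by
        have : (0 : ℤ) ≤ j * e := by positivity
        omega))
      have h3 : n + ((j + 1 : ℕ) : ℤ) * e - 1 = n + j * e + e - 1 := by push_cast; ring
      rw [h3]; omega
  have h3 : ∀ n ≥ N, h n + b (n - 1) ≤ b (n + (e * e' : ℕ) - 1) := by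
    intro n hn
    refine (hb n hn).trans ?_
    have := h2 (e' - 1) (n + e) (by omega)
    have h4 : ((e' - 1 : ℕ) : ℤ) = e' - 1 := by omega
    have h5 : n + ((e * e' : ℕ) : ℤ) - 1 = n + e + ((e' - 1 : ℕ) : ℤ) * e - 1 := by
      rw [h4]; push_cast; ring
    rw [h5]; exact this
  have h4 : ∀ j : ℕ, ∀ n ≥ max N N', j * h n + b (n - 1) ≤ b (n + (j * (e * e') : ℕ) - 1) := by
    intro j n hn
    have hn1 : n ≥ N := le_trans (le_max_left _ _) hn
    have hn2 : n ≥ N' := le_trans (le_max_right _ _) hn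
    induction j with
    | zero => simp
    | succ j ih =>
      have hpos : (0 : ℤ) ≤ (j * (e * e') : ℕ) := by positivity
      have a1 := h3 (n + (j * (e * e') : ℕ)) (by omega)
      have a2 := h1 (j * e) n hn2
      have e1 : n + ((j * e : ℕ) : ℤ) * e' = n + (j * (e * e') : ℕ) := by push_cast; ring
      rw [e1] at a2
      have e2 : n + (((j + 1) * (e * e') : ℕ) : ℤ) - 1 =
        n + (j * (e * e') : ℕ) + (e * e' : ℕ) - 1 := by push_cast; ring
      rw [e2, add_mul, one_mul]
      omega
  obtain ⟨a, N0, hN0⟩ := hp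
  simp only at hN0
  cases s with
  | zero =>
    refine ⟨(max N N').toNat + N0 + 1, fun n hn => ?_⟩
    have a1 := h4 (a + 1) n (by omega)
    have e1 : (n : ℤ) + ((a + 1) * (e * e') : ℕ) - 1 = (n + (a + 1) * (e * e') - 1 : ℕ) := by
      omega
    rw [e1] at a1
    have a2 := hN0 (n + (a + 1) * (e * e') - 1) (by omega)
    rw [pow_zero, mul_one] at a2
    by_contra hne
    have : a + 1 ≤ (a + 1) * h n := Nat.le_mul_of_pos_right _ (Nat.pos_of_ne_zero hne)
    omega
  | succ s =>
    refine ⟨a * (1 + e * e') ^ (s + 1), (max N N').toNat + N0 + 1, fun n hn => ?_⟩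
    have a1 := h4 n n (by omega)
    have e1 : (n : ℤ) + (n * (e * e') : ℕ) - 1 = (n + n * (e * e') - 1 : ℕ) := by
      omega
    rw [e1] at a1
    have a2 := hN0 (n + n * (e * e') - 1) (by omega)
    have hn0 : 0 < n := by omega
    have a3 : n * h n ≤ n * (a * (1 + e * e') ^ (s + 1) * n ^ s) := by
      calc n * h n ≤ a * (n + n * (e * e') - 1) ^ (s + 1) := by omega
        _ ≤ a * (n + n * (e * e')) ^ (s + 1) := by gcongr; omega
        _ = a * (n * (1 + e * e')) ^ (s + 1) := by rw [mul_add, mul_one]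
        _ = _ := by rw [mul_pow]; ring
    exact Nat.le_of_mul_le_mul_left a3 hn0

lemma num2 {b h : ℤ → ℕ} {e : ℕ} (he : 0 < e) (ha : ∀ n, b n ≤ b (n + e) + h n) {s : ℕ}
    (hp : PG (fun n => h (-n)) s) : PG (fun n => b (-n)) (s + 1) := by
  have key : ∀ n0 : ℕ, ∃ M, ∀ (n C : ℕ), (∀ i : ℕ, n0 ≤ i → i ≤ n → h (-i) ≤ C) →
      b (-n) ≤ M + n * C := by
    intro n0
    refine ⟨∑ j ∈ Finset.range (n0 + e), b (-j), fun n => ?_⟩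
    induction n using Nat.strong_induction_on with
    | _ n ih =>
      intro C hC
      by_cases hn : n < n0 + e
      · have := Finset.single_le_sum (f := fun j : ℕ => b (-(j : ℤ))) (fun _ _ => Nat.zero_le _)
          (Finset.mem_range.2 hn)
        exact this.trans (Nat.le_add_right _ _)
      · have a1 := ih (n - e) (by omega) C (fun i h1 h2 => hC i h1 (by omega))
        have a2 := ha (-n)
        have e1 : -(n : ℤ) + e = -((n - e : ℕ) : ℤ) := by omega
        rw [e1] at a2
        have a3 := hC n (by omega) le_rfl
        have a4 : (n - e) * C + C ≤ n * C := by
          rw [← Nat.succ_mul]; gcongr; omega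
        omega
  cases s with
  | zero =>
    obtain ⟨N, hN⟩ := hp
    obtain ⟨M, hM⟩ := key N
    refine ⟨M, 0, fun n _ => ?_⟩
    have := hM n 0 (fun i hi _ => (hN i hi).le)
    simpa using this
  | succ s =>
    obtain ⟨a, N, hN⟩ := hp
    obtain ⟨M, hM⟩ := key N
    refine ⟨M + a, 1, fun n hn => ?_⟩
    have := hM n (a * n ^ s) (fun i hi hin => (hN i hi).trans (by gcongr))
    refine this.trans ?_
    have h1 : 1 ≤ n ^ (s + 1) := Nat.one_le_pow _ _ hn
    calc M + n * (a * n ^ s) = M * 1 + a * n ^ (s + 1) := by ring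
      _ ≤ M * n ^ (s + 1) + a * n ^ (s + 1) := by gcongr
      _ = _ := by ring

lemma pg_iff (f : ℕ → ℕ) (s : ℕ) :
    (∃ a : ℝ, ∀ᶠ n : ℕ in atTop, (f n : ℝ) ≤ a * (n : ℝ) ^ ((s : ℤ) - 1)) ↔ PG f s := by
  cases s with
  | zero =>
    constructor
    · rintro ⟨a, ha⟩
      obtain ⟨N, hN⟩ := eventually_atTop.1 ha
      obtain ⟨m, hm⟩ := exists_nat_gt a
      refine ⟨N + m + 1, fun n hn => ?_⟩
      have h1 := hN n (by omega)
      have hn0 : (0 : ℝ) < n := by exact_mod_cast (by omega : 0 < n)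
      have h2 : a < n := hm.trans (by exact_mod_cast (by omega : m < n))
      have h3 : a * (n : ℝ) ^ (((0 : ℕ) : ℤ) - 1) < 1 := by
        have : ((0 : ℕ) : ℤ) - 1 = -1 := by norm_num
        rw [this, zpow_neg_one, ← div_eq_mul_inv, div_lt_one hn0]
        exact h2
      have : (f n : ℝ) < 1 := h1.trans_lt h3
      have : f n < 1 := by exact_mod_cast this
      omega
    · rintro ⟨N, hN⟩
      exact ⟨0, eventually_atTop.2 ⟨N, fun n hn => by rw [hN n hn]; simp⟩⟩
  | succ s =>
    have e1 : ((s + 1 : ℕ) : ℤ) - 1 = (s : ℤ) := by push_cast; ring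
    rw [e1]
    simp only [zpow_natCast]
    constructor
    · rintro ⟨a, ha⟩
      obtain ⟨N, hN⟩ := eventually_atTop.1 ha
      obtain ⟨m, hm⟩ := exists_nat_gt a
      refine ⟨m, N, fun n hn => ?_⟩
      have h1 : (f n : ℝ) ≤ m * (n : ℝ) ^ s := (hN n hn).trans (by gcongr)
      exact_mod_cast h1
    · rintro ⟨a, N, hN⟩
      refine ⟨a, eventually_atTop.2 ⟨N, fun n hn => ?_⟩⟩
      exact_mod_cast hN n hn

end Num

section Main
variable {B : Type*} [CommRing B] {k : Type*} [Field k] [Algebra B k]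
  (hk : Function.Surjective (algebraMap B k))
  (hm : RegIdeal (RingHom.ker (algebraMap B k)))
  {x : ℕ → B} {c : ℕ} (hx : RegUpTo x c) (hJ : Jx x c ≤ RingHom.ker (algebraMap B k))
include hk hm hx hJ

theorem growth_main (s : ℕ) : ∀ {I : Type v} {deg : I → ℤ} {D : Module.End B (I →₀ B)},
    Cx x c deg D → PG (fun n => bet deg (red k D) n) s →
      PG (fun n => bet deg (red k D) (-n)) s := by
  induction s with
  | zero =>
    intro I deg D h hp
    obtain ⟨N, hN⟩ := hp
    have hv := vanish hk hm c hx hJ I deg D h ⟨N, fun n hn => by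
      rw [← bet_eq_zero (h.fin _)]
      have := hN n.toNat (by omega)
      simp only at this
      rwa [Int.toNat_of_nonneg (by omega)] at this⟩
    exact ⟨0, fun n _ => (bet_eq_zero (h.fin _)).2 (hv _)⟩
  | succ s ih =>
    intro I deg D h hp
    obtain ⟨e, he, g, hg, hgc, N, hN⟩ := thmE hk hm hx hJ h
    have hC := h.cone hg hgc
    obtain ⟨e', he', g', hg', hgc', N', hN'⟩ := thmE hk hm hx hJ hC
    have hdg := red_comm hk hJ hgc
    have hdg' := red_comm hk hJ hgc'
    have cb := fun n hn1 hn2 => cone_b h.fin (red_homog (k := k) h.hD) (red_homog hg) hdg n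
      (hN n hn1) (hN (n - 1) hn2)
    have cb' := fun n hn1 hn2 => cone_b hC.fin (red_homog (k := k) hC.hD) (red_homog hg') hdg' n
      (hN' n hn1) (hN' (n - 1) hn2)
    have ca := cone_a h.fin (red_homog (k := k) h.hD) (red_homog hg) hdg
    have hih := ih hC
    rw [red_cone hk] at cb' hih
    refine num2 he ca (hih ?_)
    refine num1 (N := N + 1) (N' := N' + 1) he he' (fun n hn => cb n (by omega) (by omega))
      (fun n hn => ?_) hp
    have := cb' (n + 1) (by omega) (by omega)
    rw [add_sub_cancel_right, show n + 1 + (e' : ℤ) - 1 = n + e' by ring] at this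
    omega

end Main

end SymGrowth

namespace SymGrowth

section Bet
variable {k : Type*} [Field k] {I : Type*}

lemma bet_zero (deg : I → ℤ) (n : ℤ) :
    bet deg (0 : Module.End k (I →₀ k)) n = Nat.card {i | deg i = n} := by
  have e1 : Module.finrank k (gr k deg n) = Nat.card {i | deg i = n} := by
    rw [gr, (Finsupp.supportedEquivFinsupp (M := k) (R := k) {i | deg i = n}).finrank_eq]
    exact Module.finrank_eq_nat_card_basis (Finsupp.basisSingleOne (R := k) (ι := {i | deg i = n}))
  rw [← e1, bet]
  let f : gr k deg n →ₗ[k] Hom (0 : Module.End k (I →₀ k)) :=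
    (Submodule.mkQ _).comp ((LinearMap.codRestrict (LinearMap.ker (0 : Module.End k (I →₀ k)))
      (gr k deg n).subtype (fun v => rfl)))
  have hf : ∀ v, f v = cls v.1 rfl := fun v => rfl
  have hinj : Function.Injective f := by
    rw [injective_iff_map_eq_zero]
    intro v hv
    rw [hf, cls_eq_zero] at hv
    obtain ⟨u, hu⟩ := hv
    exact Subtype.ext hu.symm
  have hr : LinearMap.range f = Hn deg 0 n := by
    ext y
    rw [mem_Hn]
    constructor
    · rintro ⟨v, rfl⟩
      exact ⟨v.1, rfl, v.2, hf v⟩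
    · rintro ⟨z, hz, hzn, rfl⟩
      exact ⟨⟨z, hzn⟩, rfl⟩
  rw [← hr]
  exact LinearMap.finrank_range_of_inj hinj

end Bet

section LiftA
variable {B A : Type*} [CommRing B] [CommRing A] {π : B →+* A} (hπ : Function.Surjective π)
  {x : ℕ → B} {c : ℕ} (hker : RingHom.ker π = Jx x c) {I : Type*} {deg : I → ℤ}
include hπ hker

lemma exists_lift (hfin : ∀ n, {i | deg i = n}.Finite) {Δ : Module.End A (I →₀ A)}
    (hΔ : Homog deg 1 Δ) (h0 : ∀ v, Δ (Δ v) = 0) (hex : ∀ v, Δ v = 0 → ∃ u, v = Δ u) :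
    ∃ D : Module.End B (I →₀ B), Cx x c deg D ∧
      ∀ v i, ∃ w, π (D v i) = Δ w i := by
  classical
  have hs : ∃ s : A → B, s 0 = 0 ∧ ∀ a, π (s a) = a := by
    refine ⟨fun a => if a = 0 then 0 else (hπ a).choose, by simp, fun a => ?_⟩
    by_cases ha : a = 0
    · simp [ha]
    · simp only [ha, if_false]; exact (hπ a).choose_spec
  obtain ⟨s, hs0, hs⟩ := hs
  let ρ : (I →₀ B) →+ (I →₀ A) := Finsupp.mapRange.addMonoidHom π.toAddMonoidHom
  have hρ : ∀ v i, ρ v i = π (v i) := fun v i => by simp [ρ]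
  have hρs : Function.Surjective ρ := by
    intro w
    refine ⟨w.mapRange s hs0, ?_⟩
    ext i
    rw [hρ, Finsupp.mapRange_apply, hs]
  have hρsm : ∀ (b : B) v, ρ (b • v) = π b • ρ v := by
    intro b v; ext i; simp [hρ]
  have hρ0 : ∀ v, ρ v = 0 ↔ v ∈ JF I (Jx x c) := by
    intro v
    rw [mem_JF, ← hker, Finsupp.ext_iff]
    simp only [hρ, RingHom.mem_ker, Finsupp.zero_apply]
  let D : Module.End B (I →₀ B) :=
    Finsupp.linearCombination B (fun j => (Δ (Finsupp.single j 1)).mapRange s hs0)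
  have hDs : ∀ j, D (Finsupp.single j 1) = (Δ (Finsupp.single j 1)).mapRange s hs0 := by
    intro j; simp [D]
  have hD : ∀ v, ρ (D v) = Δ (ρ v) := by
    intro v
    induction v using Finsupp.induction_linear with
    | zero => simp
    | add f g hf hg => simp only [map_add, hf, hg]
    | single j b =>
      have e1 : Finsupp.single j b = b • Finsupp.single j (1 : B) := by simp
      have e2 : ρ (Finsupp.single j (1 : B)) = Finsupp.single j 1 := by
        simp [ρ]
      rw [e1, map_smul, hρsm, hρsm, map_smul, e2, hDs]
      congr 1
      ext i
      rw [hρ, Finsupp.mapRange_apply, hs]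
  refine ⟨D, ⟨hfin, ?_, ?_, ?_⟩, fun v i => ⟨ρ v, by rw [← hD, hρ]⟩⟩
  · refine homog_of_single fun j => ?_
    have := hΔ _ _ (single_mem_gr deg j 1)
    rw [mem_gr] at this ⊢
    intro i hi
    refine this i fun h => hi ?_
    rw [hDs, Finsupp.mapRange_apply, h, hs0]
  · intro v
    rw [← hρ0, Module.End.mul_apply, hD, hD, h0]
  · intro v hv
    rw [← hρ0, hD] at hv
    obtain ⟨w, hw⟩ := hex _ hv
    obtain ⟨u, rfl⟩ := hρs w
    refine ⟨u, ?_⟩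
    rw [← hρ0, map_sub, hD, hw, sub_self]

end LiftA

lemma coord_mem {A : Type*} [CommRing A] {M : Type*} [AddCommGroup M] [Module A M] (f : M →ₗ[A] A) {y : M} {J : Ideal A}
    (hy : y ∈ J • (⊤ : Submodule A M)) : f y ∈ J := by
  have := Submodule.smul_top_le_comap_smul_top J f hy
  simpa using this

section Fam
variable {A : Type u} [CommRing A] [IsLocalRing A] (G : ℤ → Type u) [∀ n, AddCommGroup (G n)]
  [∀ n, Module A (G n)] (δ : ∀ n, G n →ₗ[A] G (n + 1))

open DFinsupp in
lemma exists_fam (hfree : ∀ n, Module.Free A (G n)) (hfg : ∀ n, Module.Finite A (G n))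
    (hex : ∀ n, LinearMap.range (δ n) = LinearMap.ker (δ (n + 1)))
    (hmin : ∀ n, LinearMap.range (δ n) ≤ maximalIdeal A • (⊤ : Submodule A (G (n + 1)))) :
    ∃ (I : Type) (deg : I → ℤ) (Δ : Module.End A (I →₀ A)), (∀ n, {i | deg i = n}.Finite) ∧
      (∀ n, Nat.card {i | deg i = n} = Module.finrank A (G n)) ∧
      Homog deg 1 Δ ∧ (∀ v, Δ (Δ v) = 0) ∧ (∀ v, Δ v = 0 → ∃ u, v = Δ u) ∧
      ∀ v i, Δ v i ∈ maximalIdeal A := by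
  classical
  let b : ∀ n, Module.Basis (Fin (Module.finrank A (G n))) A (G n) := fun n =>
    Module.finBasis A (G n)
  let Δ0 : (Π₀ n, G n) →ₗ[A] (Π₀ n, G n) :=
    DFinsupp.lsum ℕ (fun n => (DFinsupp.lsingle (n + 1)).comp (δ n))
  have hs : ∀ n v, Δ0 (DFinsupp.single n v) = DFinsupp.single (n + 1) (δ n v) := by
    intro n v
    simp [Δ0]
  have hΔ0 : ∀ y n, (Δ0 y) (n + 1) = δ n (y n) := by
    intro y n
    induction y using DFinsupp.induction with
    | h0 => simp
    | ha m v y _ _ ih =>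
      rw [map_add, DFinsupp.add_apply, DFinsupp.add_apply, map_add, ih, hs]
      congr 1
      by_cases h : m = n
      · subst h; simp
      · rw [DFinsupp.single_eq_of_ne (by omega), DFinsupp.single_eq_of_ne (by omega), map_zero]
  have hdd : ∀ n v, δ (n + 1) (δ n v) = 0 := by
    intro n v
    have : δ n v ∈ LinearMap.ker (δ (n + 1)) := by rw [← hex]; exact ⟨v, rfl⟩
    exact this
  have hsq : ∀ y, Δ0 (Δ0 y) = 0 := by
    intro y
    ext n
    obtain ⟨n, rfl⟩ : ∃ m, n = m + 1 + 1 := ⟨n - 2, by ring⟩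
    rw [hΔ0, hΔ0, hdd, DFinsupp.zero_apply]
  have hexa : ∀ y, Δ0 y = 0 → ∃ u, y = Δ0 u := by
    intro y hy
    have : y ∈ LinearMap.range Δ0 := by
      rw [← DFinsupp.sum_single (f := y), DFinsupp.sum]
      refine Submodule.sum_mem _ fun n _ => ?_
      obtain ⟨n, rfl⟩ : ∃ m, n = m + 1 := ⟨n - 1, by ring⟩
      have h1 : y (n + 1) ∈ LinearMap.ker (δ (n + 1)) := by
        rw [LinearMap.mem_ker, ← hΔ0, hy, DFinsupp.zero_apply]
      rw [← hex] at h1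
      obtain ⟨w, hw⟩ := h1
      exact ⟨DFinsupp.single n w, by rw [hs, hw]⟩
    obtain ⟨u, hu⟩ := this
    exact ⟨u, hu.symm⟩
  let Φ : (Π₀ n, G n) ≃ₗ[A] ((Σ n, Fin (Module.finrank A (G n))) →₀ A) := (DFinsupp.basis b).repr
  have hΦ : ∀ y i, Φ y i = (b i.1).repr (y i.1) i.2 := by
    intro y i
    rfl
  refine ⟨Σ n, Fin (Module.finrank A (G n)), Sigma.fst,
    (Φ.toLinearMap.comp Δ0).comp Φ.symm.toLinearMap, ?_, ?_, ?_, ?_, ?_, ?_⟩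
  · intro n
    refine (Set.finite_range (fun j : Fin (Module.finrank A (G n)) =>
      (⟨n, j⟩ : Σ n, Fin (Module.finrank A (G n))))).subset ?_
    rintro ⟨m, j⟩ rfl
    exact ⟨j, rfl⟩
  · intro n
    have := Nat.card_congr (Equiv.sigmaFiberEquiv
      (fun i : Fin (Module.finrank A (G n)) => ()))
    rw [Nat.card_congr (Equiv.ofBijective (fun j : Fin (Module.finrank A (G n)) =>
      (⟨⟨n, j⟩, rfl⟩ : {i : Σ n, Fin (Module.finrank A (G n)) | i.1 = n})) ?_).symm]
    · simp
    · constructor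
      · intro i j hij
        simpa using hij
      · rintro ⟨⟨m, j⟩, rfl⟩
        exact ⟨j, rfl⟩
  · intro n v hv
    obtain ⟨y, rfl⟩ := Φ.surjective v
    rw [mem_gr] at hv ⊢
    rintro ⟨m, j⟩ hi
    obtain ⟨m, rfl⟩ : ∃ p, m = p + 1 := ⟨m - 1, by ring⟩
    simp only [LinearMap.comp_apply, LinearEquiv.coe_coe, LinearEquiv.symm_apply_apply, hΦ,
      hΔ0] at hi
    by_contra hne
    apply hi
    have : y m = 0 := by
      rw [← (b m).repr.map_eq_zero_iff]
      ext l
      by_contra hl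
      have := hv ⟨m, l⟩ (by rw [hΦ]; exact hl)
      simp only at this hne
      omega
    rw [this, map_zero, map_zero, Finsupp.zero_apply]
  · intro v
    simp [hsq]
  · intro v hv
    obtain ⟨y, rfl⟩ := Φ.surjective v
    simp only [LinearMap.comp_apply, LinearEquiv.coe_coe, LinearEquiv.symm_apply_apply,
      LinearEquiv.map_eq_zero_iff] at hv
    obtain ⟨u, rfl⟩ := hexa y hv
    exact ⟨Φ u, by simp⟩
  · rintro v ⟨m, j⟩
    obtain ⟨m, rfl⟩ : ∃ p, m = p + 1 := ⟨m - 1, by ring⟩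
    simp only [LinearMap.comp_apply, LinearEquiv.coe_coe, hΦ, hΔ0]
    exact coord_mem ((b (m + 1)).coord j) (hmin m ⟨_, rfl⟩)

end Fam

end SymGrowth

namespace SymGrowth

section Final
variable {B : Type u} [CommRing B] [IsLocalRing B]

lemma Jx_list (xs : List B) : ∀ i ≤ xs.length,
    Jx (fun i => xs.getD i 0) i = Ideal.ofList (xs.take i) := by
  intro i
  induction i with
  | zero => intro _; simp [Jx]
  | succ i ih =>
    intro hi
    rw [Jx, ih (by omega), List.take_succ_eq_append_getElem (by omega : i < xs.length),
      Ideal.ofList_append, Ideal.ofList_singleton, List.getD_eq_getElem _ _ (by omega)]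

lemma regUpTo_list {xs : List B} (h : RingTheory.Sequence.IsWeaklyRegular B xs) :
    RegUpTo (fun i => xs.getD i 0) xs.length := by
  intro i hi b hb
  rw [Jx_list xs i hi.le] at hb ⊢
  have := h.regular_mod_prev i hi
  simp only [List.getD_eq_getElem _ _ hi] at hb
  have e1 : (Ideal.ofList (xs.take i) • ⊤ : Submodule B B) = Ideal.ofList (xs.take i) := by
    simp
  have h1 : xs[i] • (Submodule.Quotient.mk b : B ⧸ (Ideal.ofList (xs.take i) • ⊤ : Submodule B B))
      = xs[i] • 0 := by
    rw [smul_zero, ← Submodule.Quotient.mk_smul, Submodule.Quotient.mk_eq_zero, e1]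
    exact hb
  have h2 := this h1
  rwa [Submodule.Quotient.mk_eq_zero, e1] at h2

theorem fam_growth (hm : RegIdeal (maximalIdeal B)) {x : ℕ → B} {c : ℕ} (hx : RegUpTo x c)
    (hJ : Jx x c ≤ maximalIdeal B) {A : Type u} [CommRing A] [IsLocalRing A]
    {π : B →+* A} (hπ : Function.Surjective π) (hker : RingHom.ker π = Jx x c)
    (G : ℤ → Type u) [∀ n, AddCommGroup (G n)]
    [∀ n, Module A (G n)] (δ : ∀ n, G n →ₗ[A] G (n + 1))
    (hfree : ∀ n, Module.Free A (G n)) (hfg : ∀ n, Module.Finite A (G n))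
    (hex : ∀ n, LinearMap.range (δ n) = LinearMap.ker (δ (n + 1)))
    (hmin : ∀ n, LinearMap.range (δ n) ≤ maximalIdeal A • (⊤ : Submodule A (G (n + 1))))
    (s : ℕ) (hp : PG (fun n => Module.finrank A (G n)) s) :
    PG (fun n => Module.finrank A (G (-n))) s := by
  obtain ⟨I, deg, Δ, hfin, hcard, hΔ, h0, hexa, hmi⟩ := exists_fam G δ hfree hfg hex hmin
  obtain ⟨D, hD, hDm⟩ := exists_lift hπ hker hfin hΔ h0 hexa
  have hk : Function.Surjective (algebraMap B (ResidueField B)) := residue_surjective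
  have hkk : RingHom.ker (algebraMap B (ResidueField B)) = maximalIdeal B := ker_residue
  have hred : red (ResidueField B) D = 0 := by
    refine red_eq_zero hk hkk.ge (J := maximalIdeal B) fun v i => ?_
    obtain ⟨w, hw⟩ := hDm v i
    have h1 : π (D v i) ∈ maximalIdeal A := by rw [hw]; exact hmi w i
    rw [mem_maximalIdeal, mem_nonunits_iff] at h1 ⊢
    exact fun hu => h1 (hu.map π)
  have key := growth_main hk (by rw [hkk]; exact hm) hx (by rw [hkk]; exact hJ) s hD
  rw [hred] at key
  simp only [bet_zero, hcard] at key
  exact key hp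

end Final

end SymGrowth

namespace SymGrowth

/-- The differential with flexible indices. -/
def dd {A : Type u} [CommRing A] (X : TotallyAcyclicComplex A) {m p : ℤ} (h : m = p + 1) :
    X.C m →ₗ[A] X.C p := by
  subst h
  exact X.d p

lemma dd_exact {A : Type u} [CommRing A] (X : TotallyAcyclicComplex A) {m p q : ℤ}
    (h : m = p + 1) (h2 : p = q + 1) :
    LinearMap.range (dd X h) = LinearMap.ker (dd X h2) := by
  subst h2
  subst h
  exact X.exact q

lemma dd_min {A : Type u} [CommRing A] [IsLocalRing A] (X : TotallyAcyclicComplex A)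
    (hmin : ∀ n : ℤ, LinearMap.range (X.d n) ≤
      (maximalIdeal A) • (⊤ : Submodule A (X.C n))) {m p : ℤ} (h : m = p + 1) :
    LinearMap.range (dd X h) ≤ (maximalIdeal A) • (⊤ : Submodule A (X.C p)) := by
  subst h
  exact hmin p

lemma dual_min {A : Type u} [CommRing A] {M N : Type*} [AddCommGroup M] [Module A M]
    [AddCommGroup N] [Module A N] [Module.Free A M] [Module.Finite A M] {J : Ideal A}
    (f : M →ₗ[A] N) (hf : LinearMap.range f ≤ J • (⊤ : Submodule A N)) :
    LinearMap.range f.dualMap ≤ J • (⊤ : Submodule A (Module.Dual A M)) := by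
  classical
  rintro _ ⟨g, rfl⟩
  rw [← (Module.Free.chooseBasis A M).sum_dual_apply_smul_coord (f.dualMap g)]
  refine Submodule.sum_mem _ fun i _ => Submodule.smul_mem_smul ?_ Submodule.mem_top
  exact coord_mem g (hf ⟨_, rfl⟩)

end SymGrowth

theorem symmetric_growth_over_complete_intersection
    (B : Type u) [CommRing B] [IsLocalRing B] (hB : IsRegularLocal B)
    (xs : List B) (hxs : ∀ x ∈ xs, x ∈ maximalIdeal B)
    (hreg : RingTheory.Sequence.IsRegular B xs)
    -- A = B/(x₁, …, x_c), presented via a surjection with kernel (x₁, …, x_c)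
    (A : Type u) [CommRing A] [IsLocalRing A]
    (π : B →+* A) (hπ : Function.Surjective π)
    (hker : RingHom.ker π = Ideal.ofList xs)
    -- a totally acyclic minimal complex of finitely generated free A-modules
    (X : TotallyAcyclicComplex A)
    (hmin : ∀ n : ℤ, LinearMap.range (X.d n) ≤
      (maximalIdeal A) • (⊤ : Submodule A (X.C n))) :
    -- conclusion: C has symmetric growth
    complexityPlus (fun n => Module.finrank A (X.C n)) =
      complexityMinus (fun n => Module.finrank A (X.C n)) := by
  obtain ⟨hN, s, hs, hc⟩ := hB
  have hm := (SymGrowth.regIdeal_max s.card B s le_rfl hs hc.le).2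
  have hx := SymGrowth.regUpTo_list hreg.toIsWeaklyRegular
  have hJl := SymGrowth.Jx_list xs xs.length le_rfl
  rw [List.take_length] at hJl
  have hJ : SymGrowth.Jx (fun i => xs.getD i 0) xs.length ≤ maximalIdeal B := by
    rw [hJl]
    exact Ideal.span_le.2 fun y hy => hxs y hy
  have hker' := hker.trans hJl.symm
  have hfree := X.free
  have hfg := X.fin
  have h1 := SymGrowth.fam_growth hm hx hJ hπ hker' (fun n => Module.Dual A (X.C n))
    (fun n => (X.d n).dualMap) (fun n => inferInstance) (fun n => inferInstance)
    X.dualExact (fun n => SymGrowth.dual_min _ (hmin n))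
  have h2 := SymGrowth.fam_growth hm hx hJ hπ hker' (fun n => X.C (-n))
    (fun n => SymGrowth.dd X (by ring : -n = -(n + 1) + 1)) (fun n => X.free _)
    (fun n => X.fin _) (fun n => SymGrowth.dd_exact X _ _)
    (fun n => SymGrowth.dd_min X hmin _)
  have e1 : ∀ n, Module.finrank A (Module.Dual A (X.C n)) = Module.finrank A (X.C n) :=
    fun n =>
    ((Module.Free.chooseBasis A (X.C n)).toDualEquiv.finrank_eq).symm
  simp only [e1] at h1
  have e2 : (fun n : ℕ => Module.finrank A (X.C (-(-(n : ℤ))))) =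
      fun n : ℕ => Module.finrank A (X.C n) := by
    funext n
    rw [neg_neg]
  unfold complexityMinus complexityPlus
  congr 1
  ext t
  simp only [Set.mem_setOf_eq]
  refine exists_congr fun s => and_congr_right fun _ => ?_
  rw [SymGrowth.pg_iff (fun n => Module.finrank A (X.C n)),
    SymGrowth.pg_iff (fun n => Module.finrank A (X.C (-n)))]
  exact ⟨h1 s, fun h => e2 ▸ h2 s h⟩
end

section
/- Let A be a commutative Noetherian local ring and let M be a finitely generated A-module of Gorenstein dimension zero. If M has finite projective dimension over A, then M is a free A-module. -/
universe u

open CategoryTheory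

/-- The Ext module `Ext_A^n(M, N)` of two `A`-modules. -/
noncomputable abbrev ExtModule (A : Type u) [CommRing A]
    (M N : Type u) [AddCommGroup M] [Module A M] [AddCommGroup N] [Module A N]
    (n : ℕ) : Type u :=
  ((Ext A (ModuleCat.{u} A) n).obj (Opposite.op (ModuleCat.of A M))).obj (ModuleCat.of A N)

/-- A module `M` over a commutative Noetherian local ring has Gorenstein dimension zero
(is totally reflexive) if the canonical map `M → M**` is bijective and
`Ext_A^n(M, A) = 0 = Ext_A^n(M*, A)` for all `n ≥ 1`. -/
def IsGorensteinDimZero (A : Type u) [CommRing A]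
    (M : Type u) [AddCommGroup M] [Module A M] : Prop :=
  Function.Bijective (Module.Dual.eval A M) ∧
  (∀ n : ℕ, 1 ≤ n → Subsingleton (ExtModule A M A n)) ∧
  (∀ n : ℕ, 1 ≤ n → Subsingleton (ExtModule A (Module.Dual A M) A n))

/-- A finite free resolution `0 → F_ℓ → ⋯ → F₁ → F₀ → M → 0` of `M` by finitely
generated free modules; its existence expresses that `M` (finitely generated over a
Noetherian local ring) has finite projective dimension. -/
structure FiniteFreeResolution (B : Type u) [CommRing B]
    (M : Type u) [AddCommGroup M] [Module B M] : Type (u + 1) where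
  len : ℕ
  F : ℕ → Type u
  [acg : ∀ n, AddCommGroup (F n)]
  [mod : ∀ n, Module B (F n)]
  free : ∀ n, Module.Free B (F n)
  fin : ∀ n, Module.Finite B (F n)
  d : ∀ n : ℕ, F (n + 1) →ₗ[B] F n
  aug : F 0 →ₗ[B] M
  augSurj : Function.Surjective aug
  ex0 : LinearMap.range (d 0) = LinearMap.ker aug
  ex : ∀ n : ℕ, LinearMap.range (d (n + 1)) = LinearMap.ker (d n)
  bounded : ∀ n : ℕ, len ≤ n → Subsingleton (F n)

namespace GDimZero

variable {A : Type u} [CommRing A] {M : Type u} [AddCommGroup M] [Module A M]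

attribute [local instance] FiniteFreeResolution.acg FiniteFreeResolution.mod

/-- The chain complex in `ModuleCat` underlying a finite free resolution. -/
noncomputable def cplx (R : FiniteFreeResolution A M) : ChainComplex (ModuleCat.{u} A) ℕ :=
  ChainComplex.of (fun n => ModuleCat.of A (R.F n)) (fun n => ModuleCat.ofHom (R.d n)) (by
    intro n
    ext x
    have : R.d (n + 1) x ∈ LinearMap.ker (R.d n) := by
      rw [← R.ex n]; exact ⟨x, rfl⟩
    exact this)

lemma cplx_d (R : FiniteFreeResolution A M) (n : ℕ) :
    (cplx R).d (n + 1) n = ModuleCat.ofHom (R.d n) :=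
  ChainComplex.of_d (fun n => ModuleCat.of A (R.F n)) (fun n => ModuleCat.ofHom (R.d n)) n

lemma cplx_exactAt_succ (R : FiniteFreeResolution A M) (n : ℕ) :
    (cplx R).ExactAt (n + 1) := by
  rw [HomologicalComplex.exactAt_iff' _ (n + 1 + 1) (n + 1) n (by simp) (by simp),
    ShortComplex.moduleCat_exact_iff]
  change ∀ x : R.F (n + 1), ((cplx R).d (n + 1) n).hom x = 0 →
    ∃ y : R.F (n + 1 + 1), ((cplx R).d (n + 1 + 1) (n + 1)).hom y = x
  rw [cplx_d, cplx_d]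
  intro x hx
  have : x ∈ LinearMap.range (R.d (n + 1)) := by rw [R.ex n]; exact hx
  exact this

lemma cplx_d_aug (R : FiniteFreeResolution A M) :
    (cplx R).d 1 0 ≫ (show (cplx R).X 0 ⟶ ModuleCat.of A M from ModuleCat.ofHom R.aug) = 0 := by
  rw [cplx_d R 0]
  ext x
  have : R.d 0 x ∈ LinearMap.ker R.aug := by
    rw [← R.ex0]; exact ⟨x, rfl⟩
  exact this

/-- The projective resolution associated to a finite free resolution. -/
noncomputable def projRes (R : FiniteFreeResolution A M) :
    ProjectiveResolution (ModuleCat.of A M) where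
  complex := cplx R
  projective n := by
    have := R.free n
    exact (IsProjective.iff_projective (R := A) (R.F n)).1 inferInstance
  π := (ChainComplex.toSingle₀Equiv _ _).symm ⟨ModuleCat.ofHom R.aug, cplx_d_aug R⟩
  quasiIso := ⟨fun n => by
    cases n
    · rw [ChainComplex.quasiIsoAt₀_iff, ShortComplex.quasiIso_iff_of_zeros']
      · constructor
        · rw [ShortComplex.moduleCat_exact_iff]
          change ∀ x : R.F 0, R.aug x = 0 → ∃ y : R.F 1, ((cplx R).d (0 + 1) 0).hom y = x
          rw [cplx_d]
          intro x hx
          have : x ∈ LinearMap.range (R.d 0) := by rw [R.ex0]; exact hx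
          exact this
        · exact (ModuleCat.epi_iff_surjective _).2 R.augSurj
      all_goals rfl
    · rw [quasiIsoAt_iff_exactAt']
      · apply cplx_exactAt_succ
      · apply ChainComplex.exactAt_succ_single_obj⟩

/-- Vanishing of `Ext` in degree `n + 1` gives extension of functionals. -/
lemma extend_functional (R : FiniteFreeResolution A M) (n : ℕ)
    (h : Subsingleton (ExtModule A M A (n + 1)))
    (f : R.F (n + 1) →ₗ[A] A) (hf : f ∘ₗ R.d (n + 1) = 0) :
    ∃ g : R.F n →ₗ[A] A, g ∘ₗ R.d n = f := by
  have hz : Limits.IsZero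
      (((cplx R).linearYonedaObj A (ModuleCat.of A A)).homology (n + 1)) :=
    (ModuleCat.isZero_of_subsingleton _).of_iso
      ((projRes R).isoExt (R := A) (n + 1) (ModuleCat.of A A)).symm
  rw [← HomologicalComplex.exactAt_iff_isZero_homology,
    HomologicalComplex.exactAt_iff' _ n (n + 1) (n + 1 + 1) (by simp) (by simp),
    ShortComplex.moduleCat_exact_iff] at hz
  have key : ∀ x : (cplx R).X (n + 1) ⟶ ModuleCat.of A A,
      (cplx R).d (n + 1 + 1) (n + 1) ≫ x = 0 →
      ∃ y : (cplx R).X n ⟶ ModuleCat.of A A, (cplx R).d (n + 1) n ≫ y = x := hz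
  rw [cplx_d, cplx_d] at key
  obtain ⟨y, hy⟩ := key (ModuleCat.ofHom f) (by
    ext x
    exact LinearMap.congr_fun hf x)
  refine ⟨y.hom, ?_⟩
  ext x
  exact LinearMap.congr_fun (congrArg ModuleCat.Hom.hom hy) x

/-- The same with values in a finite free module. -/
lemma extend_map (R : FiniteFreeResolution A M) (n : ℕ)
    (h : Subsingleton (ExtModule A M A (n + 1)))
    (N : Type u) [AddCommGroup N] [Module A N] [Module.Free A N] [Module.Finite A N]
    (f : R.F (n + 1) →ₗ[A] N) (hf : f ∘ₗ R.d (n + 1) = 0) :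
    ∃ g : R.F n →ₗ[A] N, g ∘ₗ R.d n = f := by
  let b := Module.Free.chooseBasis A N
  have H : ∀ i, ∃ g : R.F n →ₗ[A] A, g ∘ₗ R.d n = b.coord i ∘ₗ f := fun i =>
    extend_functional R n h _ (by rw [LinearMap.comp_assoc, hf, LinearMap.comp_zero])
  choose g hg using H
  refine ⟨b.equivFun.symm.toLinearMap ∘ₗ LinearMap.pi g, ?_⟩
  ext x
  rw [LinearMap.comp_apply, LinearMap.comp_apply, LinearEquiv.coe_coe,
    LinearEquiv.symm_apply_eq]
  ext i
  simpa using LinearMap.congr_fun (hg i) x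

/-- Descending induction: all differentials are von Neumann regular. -/
lemma exists_pseudo_inverse (R : FiniteFreeResolution A M)
    (h : ∀ n : ℕ, 1 ≤ n → Subsingleton (ExtModule A M A n)) (k : ℕ) :
    ∀ n, R.len ≤ n + k → ∃ s : R.F n →ₗ[A] R.F (n + 1), R.d n ∘ₗ s ∘ₗ R.d n = R.d n := by
  induction k with
  | zero =>
    intro n hn
    have := R.bounded n (by simpa using hn)
    exact ⟨0, by ext x; exact Subsingleton.elim _ _⟩
  | succ k ih =>
    intro n hn
    obtain ⟨s, hs⟩ := ih (n + 1) (by omega)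
    have := R.free (n + 1)
    have := R.fin (n + 1)
    obtain ⟨g, hg⟩ := extend_map R n (h (n + 1) (by omega)) (R.F (n + 1))
      (LinearMap.id - R.d (n + 1) ∘ₗ s) (by
        ext x
        have := LinearMap.congr_fun hs x
        simp only [LinearMap.comp_apply] at this
        simp [this])
    refine ⟨g, ?_⟩
    rw [hg]
    ext x
    have : R.d (n + 1) (s x) ∈ LinearMap.ker (R.d n) := by
      rw [← R.ex n]; exact ⟨_, rfl⟩
    simpa using this

lemma projective_of_resolution (R : FiniteFreeResolution A M)
    (h : ∀ n : ℕ, 1 ≤ n → Subsingleton (ExtModule A M A n)) : Module.Projective A M := by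
  obtain ⟨s, hs⟩ := exists_pseudo_inverse R h R.len 0 (by omega)
  have := R.free 0
  let e : R.F 0 →ₗ[A] R.F 0 := LinearMap.id - R.d 0 ∘ₗ s
  have he : LinearMap.ker R.aug ≤ LinearMap.ker e := by
    rw [← R.ex0]
    rintro _ ⟨x, rfl⟩
    have := LinearMap.congr_fun hs x
    simp only [LinearMap.comp_apply] at this
    simp [e, this]
  let t : M →ₗ[A] R.F 0 := (LinearMap.ker R.aug).liftQ e he ∘ₗ
    (R.aug.quotKerEquivOfSurjective R.augSurj).symm.toLinearMap
  refine Module.Projective.of_split t R.aug ?_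
  ext m
  obtain ⟨x, rfl⟩ := R.augSurj m
  have h1 : (R.aug.quotKerEquivOfSurjective R.augSurj).symm (R.aug x) =
      (LinearMap.ker R.aug).mkQ x := by
    rw [LinearEquiv.symm_apply_eq]
    rfl
  have h2 : R.aug (R.d 0 (s x)) = 0 := by
    have : R.d 0 (s x) ∈ LinearMap.ker R.aug := by
      rw [← R.ex0]; exact ⟨_, rfl⟩
    exact this
  simp only [t, LinearMap.comp_apply, LinearEquiv.coe_coe, h1]
  simp [e, h2]

end GDimZero

theorem free_of_isGorensteinDimZero_of_finite_projective_dimension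
    (A : Type u) [CommRing A] [IsNoetherianRing A] [IsLocalRing A]
    (M : Type u) [AddCommGroup M] [Module A M] [Module.Finite A M]
    (hM : IsGorensteinDimZero A M)
    (hpd : Nonempty (FiniteFreeResolution A M)) :
    Module.Free A M := by
  obtain ⟨R⟩ := hpd
  have := GDimZero.projective_of_resolution R hM.2.1
  exact Module.free_of_flat_of_isLocalRing
end
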